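/- arXiv:2503.08991 — 3 statements merged into one kernel-verified Lean document; each statement's English description precedes it below -/
import Mathlib

section
/- Let ν be any weak* limit point of the sequence (ν_r)_{r∈ℕ} of probability measures on 𝕋², where ν_r = (1/#P_r^*(f_A)) Σ_{p ∈ P_r^*(f_A)} δ_p. Then for every ε > 0 such that 3ε is an expansive constant of f_A, there exist constants A_ε, B_ε > 0 such that for every x ∈ 𝕋² and every n ≥ 1, A_ε·λ^{−n} ≤ ν(B_n(x,ε)) ≤ B_ε·λ^{−n}; in particular, ν(B_n(y,ε)) ≤ (B_ε/A_ε)·ν(B_n(x,ε)) for all x,y ∈ 𝕋² and n ≥ 1, so ν is a homogeneous measure for f_A. -/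
open Matrix

/-- The 2-torus ℝ²/ℤ². -/
abbrev Torus : Type := AddCircle (1:ℝ) × AddCircle (1:ℝ)

/-- The quotient map ℝ² → 𝕋². -/
noncomputable def torusMk (v : ℝ × ℝ) : Torus := (↑v.1, ↑v.2)

/-- The linear action of an integer matrix `A ∈ SL(2,ℤ)` on ℝ². -/
noncomputable def matAct (A : Matrix.SpecialLinearGroup (Fin 2) ℤ) (v : ℝ × ℝ) : ℝ × ℝ :=
  ((A.1 0 0 : ℤ) * v.1 + (A.1 0 1 : ℤ) * v.2,
   (A.1 1 0 : ℤ) * v.1 + (A.1 1 1 : ℤ) * v.2)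

open MeasureTheory Filter

/-- The `t`-th iterate of `f`, for `t : ℤ`. -/
noncomputable def zIter {X : Type*} [TopologicalSpace X] (f : X ≃ₜ X) (t : ℤ) : X → X :=
  ⇑(f.toEquiv ^ t)

/-- The Bowen ball of center `y`, radius `ρ` and length `n` for `g`. -/
def BowenBall {Y : Type*} [MetricSpace Y] (g : Y → Y) (y : Y) (ρ : ℝ) (n : ℕ) : Set Y :=
  {z | ∀ k < n, dist (g^[k] z) (g^[k] y) ≤ ρ}

/-- `P_r^*(f_A)`: the periodic and antipodal periodic points of period `r`,
with the four self-antipodal points removed. -/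
def Pstar (fA : Torus ≃ₜ Torus) (r : ℕ) : Set Torus :=
  ({x : Torus | fA^[r] x = x} ∪ {x : Torus | fA^[r] x = -x}) \ {x : Torus | -x = x}

/-- The measure `ν_r`: the uniform average of the Dirac measures on `P_r^*(f_A)`. -/
noncomputable def nuMeas (fA : Torus ≃ₜ Torus) (r : ℕ) : Measure Torus :=
  (Nat.card (Pstar fA r) : ENNReal)⁻¹ •
    Measure.sum (fun p : (Pstar fA r) => Measure.dirac (p : Torus))

/-!
The limit measure is Haar measure. A nontrivial character `k` sums to zero over the finite group
`ker (A ^ r ∓ 1)` unless that group lies in `ker k`, i.e. unless `k = m (A ^ r ∓ 1)` for an integer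
row `m`; comparing values of the quadratic form `det (k, k A)` this forces
`|det (A ^ r ∓ 1)| ≤ |det (k, k A)|`, which fails for large `r`. The two kernels overlap only in
self-antipodal points, so their union minus these has bounded character sums, while its cardinality
grows.

In eigenvector coordinates, a Bowen ball of length `n` and small radius is squeezed between boxes
with sides of order `λ ^ (-n)` and `1`. Expansiveness and compactness place the Bowen ball of radius
`ε`, up to a bounded number of iterates, inside one of small radius.
-/

open UnitAddTorus (mFourier)
open scoped Topology Matrix.Module

namespace ToralAut

section IntegerMatrices

/-- The determinant of the rows `k` and `k ᵥ* A`: a binary quadratic form in `k`, playing the role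
of a norm form. It is multiplied by `N.det` when a matrix `N` commuting with `A` acts on `k`, and
represents zero nontrivially over `ℤ` only if `A.discr` is a square. -/
def krylovDet {R : Type*} [CommRing R] (A : Matrix (Fin 2) (Fin 2) R) (k : Fin 2 → R) : R :=
  (of ![k, k ᵥ* A]).det

lemma krylovDet_eq {R : Type*} [CommRing R] (A : Matrix (Fin 2) (Fin 2) R) (k : Fin 2 → R) :
    krylovDet A k = A 0 1 * k 0 ^ 2 + (A 1 1 - A 0 0) * k 0 * k 1 - A 1 0 * k 1 ^ 2 := by
  simp only [krylovDet, det_fin_two, of_apply, cons_val_zero, cons_val_one, vecMul, dotProduct,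
    Fin.sum_univ_two]
  ring

lemma krylovDet_smul {R : Type*} [CommRing R] (A : Matrix (Fin 2) (Fin 2) R) (c : R)
    (k : Fin 2 → R) : krylovDet A (c • k) = c ^ 2 * krylovDet A k := by
  simp only [krylovDet_eq, Pi.smul_apply, smul_eq_mul]
  ring

lemma krylovDet_vecMul {R : Type*} [CommRing R] {A N : Matrix (Fin 2) (Fin 2) R}
    (h : Commute N A) (m : Fin 2 → R) : krylovDet A (m ᵥ* N) = krylovDet A m * N.det := by
  have : of ![m ᵥ* N, m ᵥ* N ᵥ* A] = of ![m, m ᵥ* A] * N := by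
    rw [vecMul_vecMul, h.eq, ← vecMul_vecMul]
    ext i j
    fin_cases i <;> rfl
  rw [krylovDet, this, det_mul, krylovDet]

lemma krylovDet_ne_zero {A : Matrix (Fin 2) (Fin 2) ℤ} (hA : ¬IsSquare A.discr)
    {k : Fin 2 → ℤ} (hk : k ≠ 0) : krylovDet A k ≠ 0 := by
  rw [discr_fin_two, trace_fin_two, det_fin_two] at hA
  intro h
  rw [krylovDet_eq] at h
  have hb : A 0 1 ≠ 0 := fun hb ↦ hA ⟨A 0 0 - A 1 1, by rw [hb]; ring⟩
  have hk1 : k 1 ≠ 0 := by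
    intro hk1
    have hk0 : k 0 = 0 := by simpa [hk1, hb] using h
    exact hk (funext fun i ↦ by fin_cases i <;> assumption)
  have hsq : (2 * A 0 1 * k 0 + (A 1 1 - A 0 0) * k 1) ^ 2 =
      ((A 0 0 + A 1 1) ^ 2 - 4 * (A 0 0 * A 1 1 - A 0 1 * A 1 0)) * k 1 ^ 2 := by
    linear_combination 4 * A 0 1 * h
  obtain ⟨j, hj⟩ := (Int.pow_dvd_pow_iff two_ne_zero).1 (Dvd.intro_left _ hsq.symm)
  refine hA ⟨j, mul_right_cancel₀ (pow_ne_zero 2 hk1) ?_⟩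
  rw [← hsq, hj]
  ring

variable {A : Matrix (Fin 2) (Fin 2) ℤ}

lemma not_isSquare_discr (hdet : A.det = 1) (htr : 3 ≤ A.trace) : ¬IsSquare A.discr := by
  rw [discr_fin_two, hdet]
  rintro ⟨j, hj⟩
  have hlt : |j| < A.trace := abs_lt_of_sq_lt_sq (by linarith) (by linarith)
  have hgt : A.trace - 1 < |j| := by
    apply lt_of_pow_lt_pow_left₀ 2 (abs_nonneg j)
    rw [sq_abs]
    linarith
  omega

lemma trace_pow_add_two {R : Type*} [CommRing R] (A : Matrix (Fin 2) (Fin 2) R) (r : ℕ) :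
    (A ^ (r + 2)).trace = A.trace * (A ^ (r + 1)).trace - A.det * (A ^ r).trace := by
  nontriviality R
  have cayley_hamilton : A ^ 2 = A.trace • A - A.det • 1 := by
    rw [← sub_eq_zero, ← sub_add]
    simpa [charpoly_fin_two, Algebra.smul_def] using aeval_self_charpoly A
  rw [pow_add, cayley_hamilton, mul_sub, mul_smul_comm, mul_smul_comm, mul_one, ← pow_succ,
    trace_sub, trace_smul, trace_smul, smul_eq_mul, smul_eq_mul]

lemma add_two_le_trace_pow (hdet : A.det = 1) (htr : 3 ≤ A.trace) (r : ℕ) :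
    r + 2 ≤ (A ^ r).trace := by
  suffices ((r : ℤ) + 2 ≤ (A ^ r).trace) ∧ (A ^ r).trace + 1 ≤ (A ^ (r + 1)).trace from this.1
  induction r with
  | zero => simpa using htr
  | succ r ih =>
    rw [trace_pow_add_two, hdet]
    push_cast
    constructor
    · linarith
    · nlinarith

lemma det_sub_smul_one {R : Type*} [CommRing R] (M : Matrix (Fin 2) (Fin 2) R) (c : R) :
    (M - c • (1 : Matrix (Fin 2) (Fin 2) R)).det = M.det - c * M.trace + c ^ 2 := by
  simp only [det_fin_two, trace_fin_two, Matrix.sub_apply, Matrix.smul_apply, one_apply_eq,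
    one_apply_ne zero_ne_one, one_apply_ne one_ne_zero, smul_eq_mul]
  ring

lemma le_abs_det_pow_sub (hdet : A.det = 1) (htr : 3 ≤ A.trace) (r : ℕ) (s : ℤˣ) :
    (r : ℤ) ≤ |(A ^ r - (s : ℤ) • (1 : Matrix (Fin 2) (Fin 2) ℤ)).det| := by
  have htr_pow := add_two_le_trace_pow hdet htr r
  have hdet_sub : (A ^ r - (s : ℤ) • (1 : Matrix (Fin 2) (Fin 2) ℤ)).det =
      2 - s * (A ^ r).trace := by
    have hs : (s : ℤ) ^ 2 = 1 := by
      rw [← Units.val_pow_eq_pow_val, Int.units_sq, Units.val_one]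
    rw [det_sub_smul_one, det_pow, hdet, one_pow, hs]
    ring
  rcases Int.units_eq_one_or s with rfl | rfl <;> rw [hdet_sub, le_abs] <;> push_cast
  · right
    linarith
  · left
    linarith

end IntegerMatrices

section ToralEndomorphisms

variable {ι : Type*} [Fintype ι]

lemma mFourier_eq_toCircle (k : ι → ℤ) (x : UnitAddTorus ι) :
    mFourier k x = AddCircle.toCircle (∑ i, k i • x i) := by
  have toCircle_sum : AddCircle.toCircle (∑ i, k i • x i) = ∏ i, AddCircle.toCircle (k i • x i) :=
    map_sum AddCircle.toCircle_addChar.toAddMonoidHom _ _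
  simp only [mFourier, ContinuousMap.coe_mk, fourier_apply, toCircle_sum]
  exact (map_prod Circle.coeHom _ _).symm

/-- The Fourier monomial `mFourier k` as an additive character, so that the orthogonality relations
of `AddChar` apply to it. -/
noncomputable def mFourierChar (k : ι → ℤ) : AddChar (UnitAddTorus ι) ℂ where
  toFun := mFourier k
  map_zero_eq_one' := by simp [mFourier]
  map_add_eq_mul' x y := by
    simp [mFourier, smul_add, AddCircle.toCircle_add, Finset.prod_mul_distrib]

lemma mFourier_eq_one_iff (k : ι → ℤ) (x : UnitAddTorus ι) :
    mFourier k x = 1 ↔ ∑ i, k i • x i = 0 := by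
  rw [mFourier_eq_toCircle, Circle.coe_eq_one, ← AddCircle.toCircle_zero,
    (AddCircle.injective_toCircle one_ne_zero).eq_iff]

variable [DecidableEq ι]

/-- The kernel of the endomorphism of the torus `ℝ^ι / ℤ^ι` induced by the integer matrix `N`, which
acts by `Matrix.Module`. -/
def toralKer (N : Matrix ι ι ℤ) : AddSubgroup (UnitAddTorus ι) :=
  (DistribSMul.toAddMonoidHom (UnitAddTorus ι) N).ker

lemma mem_toralKer {N : Matrix ι ι ℤ} {x : UnitAddTorus ι} : x ∈ toralKer N ↔ N • x = 0 := Iff.rfl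

lemma det_smul_eq_zero_of_mem_toralKer {N : Matrix ι ι ℤ} {x : UnitAddTorus ι}
    (hx : x ∈ toralKer N) : N.det • x = 0 := by
  rw [← one_smul (Matrix ι ι ℤ) x, ← smul_assoc, ← adjugate_mul, mul_smul, mem_toralKer.1 hx,
    smul_zero]

lemma finite_toralKer {N : Matrix ι ι ℤ} (hN : N.det ≠ 0) :
    (toralKer N : Set (UnitAddTorus ι)).Finite := by
  have htorsion : {u : UnitAddCircle | N.det • u = 0}.Finite :=
    AddCircle.finite_torsion_of_isSMulRegular_int 1 N.det <|
      .of_right_eq_zero_of_smul fun _ ↦ by simp [hN]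
  exact (Set.Finite.pi' fun _ ↦ htorsion).subset fun x hx i ↦
    congrFun (det_smul_eq_zero_of_mem_toralKer hx) i

lemma exists_vecMul_eq_of_mFourier_eq_one {N : Matrix ι ι ℤ} (hN : N.det ≠ 0) {k : ι → ℤ}
    (h : ∀ x ∈ toralKer N, mFourier k x = 1) : ∃ m : ι → ℤ, m ᵥ* N = k := by
  have hdet : (N.det : ℝ) ≠ 0 := Int.cast_ne_zero.2 hN
  have hdvd (i : ι) : ∃ m : ℤ, (k ᵥ* N.adjugate) i = N.det * m := by
    let x : UnitAddTorus ι := fun j ↦ ((N.adjugate j i / N.det : ℝ) : UnitAddCircle)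
    have sum_smul_x (a : ι → ℤ) :
        ∑ j, a j • x j = 0 ↔ ∃ m : ℤ, (a ᵥ* N.adjugate) i = N.det * m := by
      have : ∑ j, a j • x j = (((a ᵥ* N.adjugate) i / N.det : ℝ) : UnitAddCircle) := by
        simp only [x, ← AddCircle.coe_zsmul, zsmul_eq_mul, ← mul_div_assoc]
        rw [← QuotientAddGroup.mk_sum, ← Finset.sum_div]
        simp [vecMul, dotProduct]
      rw [this, AddCircle.coe_eq_zero_iff]
      simp only [zsmul_eq_mul, mul_one, eq_div_iff hdet, mul_comm _ (N.det : ℝ), eq_comm]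
      norm_cast
    have hx : x ∈ toralKer N := by
      refine mem_toralKer.2 (funext fun l ↦ ?_)
      rw [Matrix.Module.smul_apply]
      refine (sum_smul_x (N l)).2 ⟨(1 : Matrix ι ι ℤ) l i, ?_⟩
      exact congrFun₂ (mul_adjugate N) l i
    exact (sum_smul_x k).1 ((mFourier_eq_one_iff k x).1 (h x hx))
  choose m hm using hdvd
  refine ⟨m, smul_right_injective _ hN ?_⟩
  have : k ᵥ* N.adjugate = N.det • m := funext hm
  simp only
  rw [← smul_vecMul, ← this, vecMul_vecMul, adjugate_mul, vecMul_smul, vecMul_one]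

end ToralEndomorphisms

section PlaneKernels

variable {A N : Matrix (Fin 2) (Fin 2) ℤ}

lemma abs_det_le_abs_krylovDet (hA : ¬IsSquare A.discr) (hcomm : Commute N A) (hN : N.det ≠ 0)
    {k : Fin 2 → ℤ} (hk : k ≠ 0) (h : ∀ x ∈ toralKer N, mFourier k x = 1) :
    |N.det| ≤ |krylovDet A k| := by
  obtain ⟨m, rfl⟩ := exists_vecMul_eq_of_mFourier_eq_one hN h
  have hm : m ≠ 0 := by
    rintro rfl
    exact hk (zero_vecMul N)
  rw [krylovDet_vecMul hcomm, abs_mul]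
  exact le_mul_of_one_le_left (abs_nonneg _) (Int.one_le_abs (krylovDet_ne_zero hA hm))

lemma abs_det_le_sq_card_toralKer_mul (hA : ¬IsSquare A.discr) (hcomm : Commute N A)
    (hN : N.det ≠ 0) : |N.det| ≤ Nat.card (toralKer N) ^ 2 * |A 0 1| := by
  have : Finite (toralKer N) := finite_toralKer hN
  let e₀ : Fin 2 → ℤ := Pi.single 0 1
  let c : ℤ := Nat.card (toralKer N)
  have hc : c • e₀ ≠ 0 := smul_ne_zero (Int.natCast_ne_zero.2 Nat.card_pos.ne') (by simp [e₀])
  have hkey := abs_det_le_abs_krylovDet hA hcomm hN hc fun x hx ↦ by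
    have hcx : Nat.card (toralKer N) • x = 0 :=
      congrArg Subtype.val (card_nsmul_eq_zero' (x := (⟨x, hx⟩ : toralKer N)))
    simpa [mFourier_eq_one_iff, e₀, c] using congrFun hcx 0
  simpa [krylovDet_smul, krylovDet_eq, e₀, c, abs_mul, mul_comm] using hkey

end PlaneKernels

section CharacterSums

lemma sum_toFinset_eq_zero_of_exists_ne_one {G R : Type*} [AddGroup G] [CommRing R] [IsDomain R]
    {K : AddSubgroup G} (hK : (K : Set G).Finite) {ψ : AddChar G R} (hψ : ∃ x ∈ K, ψ x ≠ 1) :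
    ∑ x ∈ hK.toFinset, ψ x = 0 := by
  have : Fintype K := hK.fintype
  have hne : ψ.compAddMonoidHom K.subtype ≠ 1 := by
    obtain ⟨x, hx, hψx⟩ := hψ
    exact fun h ↦ hψx (DFunLike.congr_fun h ⟨x, hx⟩)
  rw [← AddChar.sum_eq_zero_of_ne_one hne]
  exact Finset.sum_subtype _ (by simp) _

lemma norm_sum_union_sdiff_le {α E : Type*} [SeminormedAddCommGroup E] [DecidableEq α]
    {S₁ S₂ H : Finset α} {g : α → E} (hinter : S₁ ∩ S₂ ⊆ H) (hg : ∀ x, ‖g x‖ ≤ 1)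
    (h₁ : ∑ x ∈ S₁, g x = 0) (h₂ : ∑ x ∈ S₂, g x = 0) :
    ‖∑ x ∈ (S₁ ∪ S₂) \ H, g x‖ ≤ 2 * H.card := by
  have norm_sum_le_card {T : Finset α} (hT : T ⊆ H) : ‖∑ x ∈ T, g x‖ ≤ H.card :=
    (norm_sum_le_of_le T fun x _ ↦ hg x).trans (by simpa using Finset.card_le_card hT)
  have hsum : ∑ x ∈ (S₁ ∪ S₂) \ H, g x =
      -(∑ x ∈ (S₁ ∪ S₂) ∩ H, g x + ∑ x ∈ S₁ ∩ S₂, g x) := by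
    rw [eq_neg_iff_add_eq_zero, ← add_assoc, add_comm (∑ x ∈ _ \ _, g x),
      Finset.sum_inter_add_sum_sdiff, Finset.sum_union_inter, h₁, h₂, add_zero]
  rw [hsum, norm_neg, two_mul]
  exact norm_add_le_of_le (norm_sum_le_card Finset.inter_subset_right) (norm_sum_le_card hinter)

lemma integral_addChar_eq_zero {G : Type*} [AddGroup G] [MeasurableSpace G] [MeasurableAdd G]
    (μ : Measure G) [μ.IsAddLeftInvariant] {ψ : AddChar G ℂ} (hψ : ψ ≠ 1) :
    ∫ x, ψ x ∂μ = 0 := by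
  obtain ⟨y, hy⟩ := AddChar.ne_one_iff.1 hψ
  have hinv := integral_add_left_eq_self (μ := μ) ψ y
  simp only [AddChar.map_add_eq_mul, integral_const_mul] at hinv
  exact (mul_left_eq_self₀.1 hinv).resolve_left hy

end CharacterSums

section Determination

lemma ext_of_forall_integral_eq_of_span_dense {X : Type*} [TopologicalSpace X] [CompactSpace X]
    [MeasurableSpace X] [BorelSpace X] [HasOuterApproxClosed X] {μ ν : Measure X}
    [IsFiniteMeasure μ] [IsFiniteMeasure ν] {s : Set C(X, ℂ)}
    (hs : (Submodule.span ℂ s).topologicalClosure = ⊤)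
    (h : ∀ f ∈ s, ∫ x, f x ∂μ = ∫ x, f x ∂ν) : μ = ν := by
  have integrable_coe (ρ : Measure X) [IsFiniteMeasure ρ] (f : C(X, ℂ)) : Integrable f ρ :=
    f.continuous.integrable_of_hasCompactSupport (.of_compactSpace f)
  let integralCLM (ρ : Measure X) [IsFiniteMeasure ρ] : C(X, ℂ) →L[ℂ] ℂ :=
    { toFun f := ∫ x, f x ∂ρ
      map_add' f g := integral_add (integrable_coe ρ f) (integrable_coe ρ g)
      map_smul' c f := integral_const_mul c f
      cont := (continuous_integral.comp (ContinuousMap.toLp 1 ρ ℂ).continuous).congr fun f ↦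
        integral_congr_ae (ContinuousMap.coeFn_toLp ρ f) }
  have heq : integralCLM μ = integralCLM ν :=
    ContinuousLinearMap.ext_on (Submodule.dense_iff_topologicalClosure_eq_top.2 hs) h
  refine ext_of_forall_integral_eq_of_IsFiniteMeasure fun f ↦ Complex.ofReal_injective ?_
  rw [← integral_complex_ofReal, ← integral_complex_ofReal]
  exact DFunLike.congr_fun heq ⟨fun x ↦ (f x : ℂ), by fun_prop⟩

instance isProbabilityMeasure_volume_unitAddCircle :
    IsProbabilityMeasure (volume : Measure (AddCircle (1 : ℝ))) :=
  ⟨by simp⟩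

variable {ι : Type*} [Fintype ι]

lemma mFourierChar_ne_one {k : ι → ℤ} (hk : k ≠ 0) : mFourierChar k ≠ 1 := by
  classical
  obtain ⟨i, hi⟩ := Function.ne_iff.1 hk
  intro h
  have hfourier (u : UnitAddCircle) : fourier (k i) u = 1 := by
    have hu : mFourier k (Pi.single i u) = 1 := DFunLike.congr_fun h _
    rwa [mFourier_eq_toCircle, Fintype.sum_eq_single i (by simp +contextual),
      Pi.single_eq_same] at hu
  have := fourier_add_half_inv_index hi one_pos 0
  rw [hfourier, hfourier] at this
  norm_num at this

lemma eq_volume_of_integral_mFourier_eq_zero (μ : Measure (UnitAddTorus ι))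
    [IsProbabilityMeasure μ] (h : ∀ k : ι → ℤ, k ≠ 0 → ∫ x, mFourier k x ∂μ = 0) :
    μ = volume := by
  refine ext_of_forall_integral_eq_of_span_dense UnitAddTorus.span_mFourier_closure_eq_top ?_
  rintro _ ⟨k, rfl⟩
  obtain rfl | hk := eq_or_ne k 0
  · simp [UnitAddTorus.mFourier_zero]
  · rw [h k hk]
    exact (integral_addChar_eq_zero volume (mFourierChar_ne_one hk)).symm

end Determination

section PeriodicPoints

/-- The solutions of `A ^ r • y = s • y` on the torus, for a sign `s`: the points of period `r` for
`s = 1`, the points sent to their antipode by the `r`-th iterate for `s = -1`. -/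
def periodKer (A : Matrix (Fin 2) (Fin 2) ℤ) (r : ℕ) (s : ℤˣ) :
    AddSubgroup (UnitAddTorus (Fin 2)) :=
  toralKer (A ^ r - (s : ℤ) • 1)

variable {A : Matrix (Fin 2) (Fin 2) ℤ}

lemma mem_periodKer {r : ℕ} {s : ℤˣ} {y : UnitAddTorus (Fin 2)} :
    y ∈ periodKer A r s ↔ A ^ r • y = (s : ℤ) • y := by
  rw [periodKer, mem_toralKer, sub_smul, smul_assoc, one_smul, sub_eq_zero]

lemma det_pow_sub_ne_zero (hdet : A.det = 1) (htr : 3 ≤ A.trace) {r : ℕ} (hr : r ≠ 0) (s : ℤˣ) :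
    (A ^ r - (s : ℤ) • (1 : Matrix (Fin 2) (Fin 2) ℤ)).det ≠ 0 := by
  have := le_abs_det_pow_sub hdet htr r s
  rw [← abs_pos]
  omega

lemma commute_pow_sub (A : Matrix (Fin 2) (Fin 2) ℤ) (r : ℕ) (s : ℤ) :
    Commute (A ^ r - s • (1 : Matrix (Fin 2) (Fin 2) ℤ)) A :=
  ((Commute.refl A).pow_left r).sub_left ((Commute.one_left A).smul_left s)

lemma finite_periodKer (hdet : A.det = 1) (htr : 3 ≤ A.trace) {r : ℕ} (hr : r ≠ 0) (s : ℤˣ) :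
    (periodKer A r s : Set (UnitAddTorus (Fin 2))).Finite :=
  finite_toralKer (det_pow_sub_ne_zero hdet htr hr s)

lemma eventually_exists_mFourier_ne_one (hdet : A.det = 1) (htr : 3 ≤ A.trace)
    {k : Fin 2 → ℤ} (hk : k ≠ 0) :
    ∀ᶠ r in atTop, ∀ s : ℤˣ, ∃ y ∈ periodKer A r s, mFourier k y ≠ 1 := by
  filter_upwards [eventually_gt_atTop (krylovDet A k).natAbs] with r hr s
  by_contra! h
  have hle := abs_det_le_abs_krylovDet (not_isSquare_discr hdet htr) (commute_pow_sub A r s)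
    (det_pow_sub_ne_zero hdet htr (by omega) s) hk h
  have := (le_abs_det_pow_sub hdet htr r s).trans (hle.trans_eq (Int.abs_eq_natAbs _))
  omega

lemma tendsto_ncard_periodKer (hdet : A.det = 1) (htr : 3 ≤ A.trace) (s : ℤˣ) :
    Tendsto (fun r ↦ (periodKer A r s : Set (UnitAddTorus (Fin 2))).ncard) atTop atTop := by
  refine tendsto_atTop.2 fun c ↦ ?_
  filter_upwards [eventually_gt_atTop (c ^ 2 * (A 0 1).natAbs)] with r hr
  by_contra! hlt
  have hdet_le := abs_det_le_sq_card_toralKer_mul (not_isSquare_discr hdet htr)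
    (commute_pow_sub A r s) (det_pow_sub_ne_zero hdet htr (by omega) s)
  have hr_le := (le_abs_det_pow_sub hdet htr r s).trans hdet_le
  have : r ≤ Nat.card (periodKer A r s) ^ 2 * (A 0 1).natAbs := by
    zify
    exact hr_le
  have : Nat.card (periodKer A r s) ^ 2 * (A 0 1).natAbs ≤ c ^ 2 * (A 0 1).natAbs := by
    gcongr
    exact hlt.le
  omega

lemma finite_setOf_neg_eq (ι : Type*) [Finite ι] : {y : UnitAddTorus ι | -y = y}.Finite := by
  refine (Set.Finite.pi' fun _ ↦ AddCircle.finite_torsion 1 two_pos).subset fun y hy i ↦ ?_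
  have : -y i = y i := congrFun hy i
  rw [Set.mem_ofPred_eq, two_nsmul, ← neg_eq_iff_add_eq_zero, this]

lemma norm_mFourier_apply {ι : Type*} [Fintype ι] (k : ι → ℤ) (y : UnitAddTorus ι) :
    ‖mFourier k y‖ = 1 := by
  rw [mFourier_eq_toCircle, Circle.norm_coe]

lemma eventually_norm_sum_mFourier_le (hdet : A.det = 1) (htr : 3 ≤ A.trace)
    {k : Fin 2 → ℤ} (hk : k ≠ 0) :
    ∀ᶠ r in atTop, ∀ F : Finset (UnitAddTorus (Fin 2)),
      (F : Set (UnitAddTorus (Fin 2))) =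
        (periodKer A r 1 ∪ periodKer A r (-1) : Set _) \ {y | -y = y} →
      ‖∑ y ∈ F, mFourier k y‖ ≤ 2 * {y : UnitAddTorus (Fin 2) | -y = y}.ncard := by
  classical
  filter_upwards [eventually_exists_mFourier_ne_one hdet htr hk, eventually_ne_atTop 0]
    with r hne hr F hF
  have hK := finite_periodKer hdet htr hr
  have hH := finite_setOf_neg_eq (Fin 2)
  obtain rfl : F = ((hK 1).toFinset ∪ (hK (-1)).toFinset) \ hH.toFinset := by
    rw [← Finset.coe_inj, hF]
    simp
  rw [Set.ncard_eq_toFinset_card _ hH]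
  refine norm_sum_union_sdiff_le (fun y hy ↦ ?_) (fun y ↦ (norm_mFourier_apply k y).le)
    (sum_toFinset_eq_zero_of_exists_ne_one (ψ := mFourierChar k) (hK 1) (hne 1))
    (sum_toFinset_eq_zero_of_exists_ne_one (ψ := mFourierChar k) (hK (-1)) (hne (-1)))
  simp only [Finset.mem_inter, Set.Finite.mem_toFinset, SetLike.mem_coe, mem_periodKer,
    Units.val_one, one_smul, Units.val_neg, neg_smul] at hy
  rw [Set.Finite.mem_toFinset, Set.mem_ofPred_eq, ← hy.2, hy.1]

end PeriodicPoints

section Equidistribution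

/-- The identification of Mathlib's torus `UnitAddTorus (Fin 2)`, which carries Fourier analysis and
the matrix action, with the product model `Torus`. -/
abbrev torusEquiv : UnitAddTorus (Fin 2) ≃L[ℤ] Torus :=
  ContinuousLinearEquiv.finTwoArrow ℤ UnitAddCircle

lemma torusEquiv_apply (y : UnitAddTorus (Fin 2)) : torusEquiv y = (y 0, y 1) := rfl

lemma semiconj_torusEquiv {A : SpecialLinearGroup (Fin 2) ℤ} {f : Torus → Torus}
    (hf : Function.Semiconj torusMk (matAct A) f) : Function.Semiconj torusEquiv (A.1 • ·) f := by
  intro y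
  obtain ⟨a, ha⟩ := QuotientAddGroup.mk_surjective (y 0)
  obtain ⟨b, hb⟩ := QuotientAddGroup.mk_surjective (y 1)
  have hy : torusEquiv y = torusMk (a, b) := Prod.ext ha.symm hb.symm
  rw [hy, ← hf, torusEquiv_apply]
  simp [Matrix.Module.smul_apply, Fin.sum_univ_two, ← ha, ← hb, torusMk, matAct, ← zsmul_eq_mul]

lemma integral_nuMeas {E : Type*} [NormedAddCommGroup E] [NormedSpace ℝ E] [CompleteSpace E]
    {fA : Torus ≃ₜ Torus} {r : ℕ} {F : Finset Torus} (hF : Pstar fA r = F) (g : Torus → E) :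
    ∫ x, g x ∂(nuMeas fA r) = (F.card : ℝ)⁻¹ • ∑ x ∈ F, g x := by
  rw [nuMeas, hF, integral_smul_measure, Measure.sum_fintype, integral_finsetSum_measure
    fun _ _ ↦ integrable_dirac (by simp)]
  simp [Finset.sum_attach F g]

variable {A : Matrix (Fin 2) (Fin 2) ℤ} {fA : Torus ≃ₜ Torus}

lemma Pstar_eq_image (hfA : Function.Semiconj torusEquiv (A • ·) fA) (r : ℕ) :
    Pstar fA r =
      torusEquiv '' ((periodKer A r 1 ∪ periodKer A r (-1) : Set _) \ {y | -y = y}) := by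
  have iterate_eq (y : UnitAddTorus (Fin 2)) : fA^[r] (torusEquiv y) = torusEquiv (A ^ r • y) := by
    rw [← hfA.iterate_right r y, smul_iterate]
  ext x
  obtain ⟨y, rfl⟩ := torusEquiv.surjective x
  rw [torusEquiv.injective.mem_set_image]
  simp only [Pstar, Set.mem_sdiff, Set.mem_union, Set.mem_ofPred_eq, iterate_eq, ← map_neg,
    torusEquiv.injective.eq_iff, SetLike.mem_coe, mem_periodKer, Units.val_one, Units.val_neg,
    one_smul, neg_smul]

lemma finite_Pstar (hdet : A.det = 1) (htr : 3 ≤ A.trace)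
    (hfA : Function.Semiconj torusEquiv (A • ·) fA) {r : ℕ} (hr : r ≠ 0) : (Pstar fA r).Finite := by
  rw [Pstar_eq_image hfA]
  exact (((finite_periodKer hdet htr hr 1).union (finite_periodKer hdet htr hr (-1))).sdiff).image _

lemma tendsto_ncard_Pstar (hdet : A.det = 1) (htr : 3 ≤ A.trace)
    (hfA : Function.Semiconj torusEquiv (A • ·) fA) :
    Tendsto (fun r ↦ (Pstar fA r).ncard) atTop atTop := by
  have hH := finite_setOf_neg_eq (Fin 2)
  refine tendsto_atTop_mono' _ ?_
    ((tendsto_sub_atTop_nat {y : UnitAddTorus (Fin 2) | -y = y}.ncard).comp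
      (tendsto_ncard_periodKer hdet htr 1))
  filter_upwards [eventually_ne_atTop 0] with r hr
  refine (Set.le_ncard_sdiff _ _ hH).trans ?_
  rw [← Set.ncard_image_of_injective _ torusEquiv.injective]
  refine Set.ncard_le_ncard ?_ (finite_Pstar hdet htr hfA hr)
  rw [Pstar_eq_image hfA]
  gcongr
  exact Set.subset_union_left

lemma tendsto_integral_mFourier_nuMeas (hdet : A.det = 1) (htr : 3 ≤ A.trace)
    (hfA : Function.Semiconj torusEquiv (A • ·) fA) {k : Fin 2 → ℤ} (hk : k ≠ 0) :
    Tendsto (fun r ↦ ∫ x, mFourier k (torusEquiv.symm x) ∂(nuMeas fA r)) atTop (𝓝 0) := by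
  let c : ℝ := 2 * {y : UnitAddTorus (Fin 2) | -y = y}.ncard
  have hlim : Tendsto (fun r ↦ c / (Pstar fA r).ncard) atTop (𝓝 0) :=
    (tendsto_natCast_atTop_atTop.comp (tendsto_ncard_Pstar hdet htr hfA)).const_div_atTop c
  refine squeeze_zero_norm' ?_ hlim
  filter_upwards [eventually_norm_sum_mFourier_le hdet htr hk, eventually_ne_atTop 0] with r hsum hr
  have hfin := finite_Pstar hdet htr hfA hr
  rw [integral_nuMeas hfin.coe_toFinset.symm, norm_smul, norm_inv, RCLike.norm_natCast,
    Set.ncard_eq_toFinset_card _ hfin, ← div_eq_inv_mul]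
  gcongr
  classical
  rw [← Finset.sum_image (f := mFourier k) torusEquiv.symm.injective.injOn]
  apply hsum
  rw [Finset.coe_image, hfin.coe_toFinset, Pstar_eq_image hfA, torusEquiv.symm_image_image]

lemma integral_nuMeas_comp_comm {r : ℕ} (hfin : (Pstar fA r).Finite) {E E' : Type*}
    [NormedAddCommGroup E] [NormedSpace ℝ E] [CompleteSpace E]
    [NormedAddCommGroup E'] [NormedSpace ℝ E'] [CompleteSpace E'] (L : E →L[ℝ] E') (g : Torus → E) :
    ∫ x, L (g x) ∂(nuMeas fA r) = L (∫ x, g x ∂(nuMeas fA r)) := by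
  rw [integral_nuMeas hfin.coe_toFinset.symm, integral_nuMeas hfin.coe_toFinset.symm, map_smul,
    map_sum]

variable {ν : Measure Torus} [IsProbabilityMeasure ν] {α : Type*} {l : Filter α} [l.NeBot]
  {φ : α → ℕ}

lemma integral_mFourier_eq_zero_of_tendsto (hdet : A.det = 1) (htr : 3 ≤ A.trace)
    (hfA : Function.Semiconj torusEquiv (A • ·) fA) (hφ : Tendsto φ l atTop)
    (hlim : ∀ g : C(Torus, ℝ),
      Tendsto (fun i ↦ ∫ x, g x ∂(nuMeas fA (φ i))) l (𝓝 (∫ x, g x ∂ν)))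
    {k : Fin 2 → ℤ} (hk : k ≠ 0) : ∫ x, mFourier k (torusEquiv.symm x) ∂ν = 0 := by
  let χ : C(Torus, ℂ) := (mFourier k).comp ⟨torusEquiv.symm, torusEquiv.symm.continuous⟩
  have integral_clm_eq_zero (L : ℂ →L[ℝ] ℝ) : L (∫ x, χ x ∂ν) = 0 := by
    have hχ : Integrable χ ν :=
      χ.continuous.integrable_of_hasCompactSupport (.of_compactSpace χ)
    have hν : Tendsto (fun i ↦ ∫ x, L (χ x) ∂(nuMeas fA (φ i))) l (𝓝 (∫ x, L (χ x) ∂ν)) :=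
      hlim (ContinuousMap.comp ⟨L, L.continuous⟩ χ)
    have hzero : Tendsto (fun i ↦ ∫ x, L (χ x) ∂(nuMeas fA (φ i))) l (𝓝 0) := by
      have := (L.continuous.tendsto 0).comp (tendsto_integral_mFourier_nuMeas hdet htr hfA hk)
      rw [map_zero] at this
      refine (this.comp hφ).congr' ?_
      filter_upwards [hφ.eventually_ne_atTop 0] with i hi
      exact (integral_nuMeas_comp_comm (finite_Pstar hdet htr hfA hi) L χ).symm
    rw [← L.integral_comp_comm hχ]
    exact tendsto_nhds_unique hν hzero
  exact Complex.ext (integral_clm_eq_zero Complex.reCLM) (integral_clm_eq_zero Complex.imCLM)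

lemma eq_volume_of_tendsto_integral_nuMeas (hdet : A.det = 1) (htr : 3 ≤ A.trace)
    (hfA : Function.Semiconj torusEquiv (A • ·) fA) (hφ : Tendsto φ l atTop)
    (hlim : ∀ g : C(Torus, ℝ),
      Tendsto (fun i ↦ ∫ x, g x ∂(nuMeas fA (φ i))) l (𝓝 (∫ x, g x ∂ν))) :
    ν = volume := by
  let e : UnitAddTorus (Fin 2) ≃ᵐ Torus := MeasurableEquiv.finTwoArrow
  have := Measure.isProbabilityMeasure_map (μ := ν) e.symm.measurable.aemeasurable
  have hmap : ν.map e.symm = volume := by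
    refine eq_volume_of_integral_mFourier_eq_zero _ fun k hk ↦ ?_
    rw [integral_map_equiv]
    exact integral_mFourier_eq_zero_of_tendsto hdet htr hfA hφ hlim hk
  rw [← (volume_preserving_finTwoArrow UnitAddCircle).map_eq, ← hmap]
  exact (e.map_map_symm).symm

end Equidistribution

section Expansiveness

lemma zIter_natCast {X : Type*} [TopologicalSpace X] (f : X ≃ₜ X) (n : ℕ) :
    zIter f n = f^[n] := by
  rw [zIter, zpow_natCast, ← Equiv.Perm.iterate_eq_pow]
  rfl

lemma zIter_add_apply {X : Type*} [TopologicalSpace X] (f : X ≃ₜ X) (s t : ℤ) (x : X) :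
    zIter f (s + t) x = zIter f s (zIter f t x) := by
  rw [zIter, _root_.zpow_add, Equiv.Perm.mul_apply]
  rfl

lemma continuous_zIter {X : Type*} [TopologicalSpace X] (f : X ≃ₜ X) (t : ℤ) :
    Continuous (zIter f t) := by
  obtain ⟨n, rfl | rfl⟩ := t.eq_nat_or_neg
  · rw [zIter_natCast]
    exact f.continuous.iterate n
  · rw [zIter, _root_.zpow_neg, ← _root_.inv_zpow, zpow_natCast, ← Equiv.Perm.iterate_eq_pow]
    exact f.symm.continuous.iterate n

variable {X : Type*} [MetricSpace X]

/-- `c` is an expansive constant of the homeomorphism `f`: distinct points are moved more than `c`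
apart by some iterate, forward or backward. -/
def IsExpansiveConst (f : X ≃ₜ X) (c : ℝ) : Prop :=
  ∀ x y, (∀ t : ℤ, dist (zIter f t x) (zIter f t y) ≤ c) → x = y

variable {f : X ≃ₜ X} {c δ : ℝ}

lemma IsExpansiveConst.mono (hc : IsExpansiveConst f c) (hδ : δ ≤ c) : IsExpansiveConst f δ :=
  fun x y h ↦ hc x y fun t ↦ (h t).trans hδ

lemma IsExpansiveConst.exists_forall_dist_lt [CompactSpace X] (hc : IsExpansiveConst f c)
    (hδ : 0 < δ) : ∃ N : ℕ, ∀ x y,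
      (∀ t : ℤ, |t| ≤ N → dist (zIter f t x) (zIter f t y) ≤ c) → dist x y < δ := by
  let V (N : ℕ) : Set (X × X) := {p | ∀ t : ℤ, |t| ≤ N → dist (zIter f t p.1) (zIter f t p.2) ≤ c}
  have isClosed_V (N : ℕ) : IsClosed (V N) := by
    simp only [V, Set.ofPred_forall]
    exact isClosed_iInter fun t ↦ isClosed_iInter fun _ ↦ isClosed_le
      (((continuous_zIter f t).comp continuous_fst).dist ((continuous_zIter f t).comp
        continuous_snd)) continuous_const
  have antitone_V : Antitone V := fun M N hMN p hp t ht ↦ hp t (ht.trans (by exact_mod_cast hMN))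
  have hnhds (p : X × X) (hp : p ∈ ⋂ N, V N) : {q : X × X | dist q.1 q.2 < δ} ∈ 𝓝 p := by
    have hp_eq : p.1 = p.2 :=
      hc _ _ fun t ↦ Set.mem_iInter.1 hp t.natAbs t (Int.abs_eq_natAbs t).le
    refine (isOpen_lt continuous_dist continuous_const).mem_nhds ?_
    rwa [Set.mem_ofPred_eq, hp_eq, dist_self]
  obtain ⟨N, hN⟩ := exists_subset_nhds_of_compactSpace antitone_V.directed_ge isClosed_V hnhds
  exact ⟨N, fun x y h ↦ @hN (x, y) h⟩

lemma IsExpansiveConst.exists_bowenBall_subset_preimage [CompactSpace X]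
    (hc : IsExpansiveConst f c) (hδ : 0 < δ) : ∃ N : ℕ, ∀ x m,
      BowenBall f x c (m + 2 * N) ⊆ f^[N] ⁻¹' BowenBall f (f^[N] x) δ m := by
  obtain ⟨N, hN⟩ := hc.exists_forall_dist_lt hδ
  refine ⟨N, fun x m z hz k hk ↦ (hN _ _ fun t ht ↦ ?_).le⟩
  obtain ⟨htl, htu⟩ := abs_le.1 ht
  obtain ⟨j, hj⟩ := Int.eq_ofNat_of_zero_le (show 0 ≤ t + ((k + N : ℕ) : ℤ) by omega)
  have zIter_iterate (w : X) : zIter f t (f^[k] (f^[N] w)) = f^[j] w := by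
    rw [← Function.iterate_add_apply, ← zIter_natCast, ← zIter_add_apply, hj, zIter_natCast]
  rw [zIter_iterate, zIter_iterate]
  exact hz j (by omega)

end Expansiveness

section BowenBalls

lemma isClosed_bowenBall {X : Type*} [MetricSpace X] {g : X → X} (hg : Continuous g) (x : X)
    (ρ : ℝ) (n : ℕ) : IsClosed (BowenBall g x ρ n) := by
  simp only [BowenBall, Set.ofPred_forall]
  exact isClosed_iInter fun k ↦ isClosed_iInter fun _ ↦
    isClosed_le ((hg.iterate k).dist continuous_const) continuous_const

lemma IsExpansiveConst.exists_measureReal_bowenBall_le {X : Type*} [MetricSpace X] [CompactSpace X]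
    [MeasurableSpace X] [BorelSpace X] {μ : Measure X} [IsFiniteMeasure μ] {f : X ≃ₜ X}
    (hf : MeasurePreserving f μ μ) {c δ b q : ℝ} (hc : IsExpansiveConst f c) (hδ : 0 < δ)
    (hq : 0 < q) (hq1 : q ≤ 1) (hb : ∀ x n, μ.real (BowenBall f x δ n) ≤ b * q ^ n) :
    ∃ b', ∀ x n, μ.real (BowenBall f x c n) ≤ b' * q ^ n := by
  obtain ⟨N, hN⟩ := hc.exists_bowenBall_subset_preimage hδ
  let M := max b (μ.real Set.univ)
  have : 0 ≤ M := le_max_of_le_right measureReal_nonneg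
  refine ⟨M / q ^ (2 * N), fun x n ↦ ?_⟩
  rw [div_mul_eq_mul_div, le_div_iff₀ (pow_pos hq _)]
  obtain hn | hn := le_total n (2 * N)
  · have hpow : q ^ (2 * N) ≤ q ^ n := pow_le_pow_of_le_one hq.le hq1 hn
    have hball : μ.real (BowenBall f x c n) ≤ M :=
      (measureReal_mono (Set.subset_univ _)).trans (le_max_right _ _)
    gcongr
  · obtain ⟨m, rfl⟩ := Nat.exists_eq_add_of_le' hn
    rw [pow_add, ← mul_assoc]
    gcongr
    calc μ.real (BowenBall f x c (m + 2 * N))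
        ≤ μ.real (f^[N] ⁻¹' BowenBall f (f^[N] x) δ m) := measureReal_mono (hN x m)
      _ = μ.real (BowenBall f (f^[N] x) δ m) :=
          (hf.iterate N).measureReal_preimage
            (isClosed_bowenBall f.continuous _ _ _).measurableSet.nullMeasurableSet
      _ ≤ b * q ^ m := hb _ _
      _ ≤ M * q ^ m := by
          gcongr
          exact le_max_left _ _

lemma measureReal_bowenBall_eq_bowenBall_zero {G : Type*} [NormedAddCommGroup G] [MeasurableSpace G]
    [MeasurableAdd G] (μ : Measure G) [μ.IsAddRightInvariant] (F : G →+ G) (x : G) (ρ : ℝ) (n : ℕ) :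
    μ.real (BowenBall F x ρ n) = μ.real (BowenBall F 0 ρ n) := by
  have : BowenBall F x ρ n = (· + -x) ⁻¹' BowenBall F 0 ρ n := by
    ext z
    simp only [BowenBall, Set.mem_preimage, Set.mem_ofPred_eq, dist_eq_norm, ← sub_eq_add_neg,
      iterate_map_sub, iterate_map_zero, sub_zero]
  rw [this, measureReal_def, measure_preimage_add_right, measureReal_def]

end BowenBalls

section Covering

instance isAddHaarMeasure_volume_torus : (volume : Measure Torus).IsAddHaarMeasure :=
  inferInstanceAs
    ((volume : Measure UnitAddCircle).prod (volume : Measure UnitAddCircle)).IsAddHaarMeasure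

lemma torusMk_add (v w : ℝ × ℝ) : torusMk (v + w) = torusMk v + torusMk w := rfl

lemma torusMk_surjective : Function.Surjective torusMk :=
  QuotientAddGroup.mk_surjective.prodMap QuotientAddGroup.mk_surjective

lemma norm_torusMk_le (v : ℝ × ℝ) : ‖torusMk v‖ ≤ ‖v‖ :=
  max_le_max QuotientAddGroup.norm_mk_le_norm QuotientAddGroup.norm_mk_le_norm

lemma norm_torusMk_of_norm_le {v : ℝ × ℝ} (hv : ‖v‖ ≤ 1 / 2) : ‖torusMk v‖ = ‖v‖ := by
  have norm_coe {u : ℝ} (hu : ‖u‖ ≤ 1 / 2) : ‖(u : UnitAddCircle)‖ = ‖u‖ := by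
    rw [Real.norm_eq_abs] at hu ⊢
    rwa [AddCircle.norm_coe_eq_abs_iff 1 one_ne_zero, abs_one]
  exact congrArg₂ max (norm_coe ((norm_fst_le v).trans hv)) (norm_coe ((norm_snd_le v).trans hv))

/-- The fundamental domain `(-1/2, 1/2]²` of `ℤ²` in `ℝ²`. -/
def fundSquare : Set (ℝ × ℝ) := Set.Ioc (-1 / 2) (-1 / 2 + 1) ×ˢ Set.Ioc (-1 / 2) (-1 / 2 + 1)

lemma norm_le_of_mem_fundSquare {v : ℝ × ℝ} (hv : v ∈ fundSquare) : ‖v‖ ≤ 1 / 2 := by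
  obtain ⟨⟨h₁, h₂⟩, h₃, h₄⟩ := hv
  exact max_le (abs_le.2 ⟨by linarith, by linarith⟩) (abs_le.2 ⟨by linarith, by linarith⟩)

lemma volume_fundSquare_ne_top : volume fundSquare ≠ ⊤ :=
  (Metric.isBounded_closedBall.subset fun _ hv ↦
    mem_closedBall_zero_iff.2 (norm_le_of_mem_fundSquare hv)).measure_lt_top.ne

lemma mem_fundSquare_of_norm_lt {v : ℝ × ℝ} (hv : ‖v‖ < 1 / 2) : v ∈ fundSquare := by
  obtain ⟨h₁, h₂⟩ := abs_lt.1 ((norm_fst_le v).trans_lt hv)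
  obtain ⟨h₃, h₄⟩ := abs_lt.1 ((norm_snd_le v).trans_lt hv)
  exact ⟨⟨by linarith, by linarith⟩, by linarith, by linarith⟩

lemma measurePreserving_torusMk :
    MeasurePreserving torusMk (volume.restrict fundSquare) volume := by
  have h := AddCircle.measurePreserving_mk (1 : ℝ) (-1 / 2)
  have hprod := h.prod h
  rwa [Measure.prod_restrict] at hprod

lemma measureReal_torus_eq {S : Set Torus} (hS : MeasurableSet S) :
    volume.real S = volume.real (torusMk ⁻¹' S ∩ fundSquare) := by
  rw [← measurePreserving_torusMk.measureReal_preimage hS.nullMeasurableSet,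
    measureReal_restrict_apply (measurePreserving_torusMk.measurable hS)]

lemma map_add_of_semiconj_torusMk {F : Type*} [FunLike F (ℝ × ℝ) (ℝ × ℝ)]
    [AddHomClass F (ℝ × ℝ) (ℝ × ℝ)] {T : F} {f : Torus → Torus}
    (hf : Function.Semiconj torusMk T f) (x y : Torus) : f (x + y) = f x + f y := by
  obtain ⟨v, rfl⟩ := torusMk_surjective x
  obtain ⟨w, rfl⟩ := torusMk_surjective y
  rw [← torusMk_add, ← hf, map_add, torusMk_add, hf, hf]

end Covering

section HyperbolicLifts

lemma exists_measureReal_preimage_box_eq (L : (ℝ × ℝ) ≃L[ℝ] (ℝ × ℝ)) :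
    ∃ κ > 0, ∀ {p q : ℝ}, 0 ≤ p → 0 ≤ q →
      volume.real (L ⁻¹' (Metric.closedBall 0 p ×ˢ Metric.closedBall 0 q)) = κ * p * q := by
  let D := LinearMap.det (L.symm : ℝ × ℝ →ₗ[ℝ] ℝ × ℝ)
  have hD : D ≠ 0 := L.symm.toLinearEquiv.isUnit_det'.ne_zero
  refine ⟨4 * |D|, by positivity, fun {p q} hp hq ↦ ?_⟩
  have hvol : volume (Metric.closedBall (0 : ℝ) p ×ˢ Metric.closedBall (0 : ℝ) q) =
      ENNReal.ofReal (2 * p * (2 * q)) := by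
    rw [Measure.volume_eq_prod, Measure.prod_prod, Real.volume_closedBall, Real.volume_closedBall,
      ← ENNReal.ofReal_mul (by positivity)]
  rw [measureReal_def, Measure.addHaar_preimage_continuousLinearEquiv, hvol,
    ← ENNReal.ofReal_mul (abs_nonneg _), ENNReal.toReal_ofReal (by positivity)]
  ring

lemma norm_iterate_le_half {T : ℝ × ℝ →L[ℝ] ℝ × ℝ} {δ : ℝ} (hδ : ‖T‖ * δ ≤ 1 / 2) {v : ℝ × ℝ}
    (hv : ‖v‖ ≤ 1 / 2) {n : ℕ} (h : ∀ k < n, ‖torusMk (T^[k] v)‖ ≤ δ) : ‖T^[n] v‖ ≤ 1 / 2 := by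
  induction n with
  | zero => exact hv
  | succ n ih =>
    have hn : ‖T^[n] v‖ ≤ 1 / 2 := ih fun k hk ↦ h k (by omega)
    rw [Function.iterate_succ_apply']
    calc ‖T (T^[n] v)‖ ≤ ‖T‖ * ‖T^[n] v‖ := T.le_opNorm _
      _ = ‖T‖ * ‖torusMk (T^[n] v)‖ := by rw [norm_torusMk_of_norm_le hn]
      _ ≤ ‖T‖ * δ := by
          gcongr
          exact h n n.lt_succ_self
      _ ≤ 1 / 2 := hδ

variable {T : ℝ × ℝ →L[ℝ] ℝ × ℝ} {L : (ℝ × ℝ) ≃L[ℝ] (ℝ × ℝ)} {lam : ℝ} {f : Torus → Torus}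

lemma apply_iterate_of_semiconj
    (hL : Function.Semiconj L T (Prod.map (lam * ·) (lam⁻¹ * ·))) (k : ℕ) (v : ℝ × ℝ) :
    L (T^[k] v) = (lam ^ k * (L v).1, lam⁻¹ ^ k * (L v).2) := by
  rw [hL.iterate_right k v, Prod.map_iterate, mul_left_iterate, mul_left_iterate]
  rfl

lemma torusMk_mem_bowenBall_zero_iff (hf : Function.Semiconj torusMk T f) {ρ : ℝ} {n : ℕ}
    {v : ℝ × ℝ} : torusMk v ∈ BowenBall f 0 ρ n ↔ ∀ k < n, ‖torusMk (T^[k] v)‖ ≤ ρ := by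
  have hf_zero : f 0 = 0 := (hf 0).symm.trans (congrArg torusMk (map_zero T))
  simp only [BowenBall, Set.mem_ofPred_eq, Function.iterate_fixed hf_zero, dist_zero_right,
    (hf.iterate_right _).eq]

lemma norm_iterate_le_of_mem_box (hlam : 1 < lam)
    (hL : Function.Semiconj L T (Prod.map (lam * ·) (lam⁻¹ * ·))) {c : ℝ} {n : ℕ} {v : ℝ × ℝ}
    (hv : L v ∈ Metric.closedBall (0 : ℝ) (c * lam⁻¹ ^ n) ×ˢ Metric.closedBall (0 : ℝ) c)
    {k : ℕ} (hk : k ≤ n) : ‖T^[k] v‖ ≤ ‖(L.symm : ℝ × ℝ →L[ℝ] ℝ × ℝ)‖ * c := by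
  have hlam0 : 0 < lam := one_pos.trans hlam
  obtain ⟨hu, hs⟩ := hv
  rw [mem_closedBall_zero_iff] at hu hs
  have : 0 ≤ c := (norm_nonneg _).trans hs
  have hexpand : ‖lam ^ k * (L v).1‖ ≤ c :=
    calc ‖lam ^ k * (L v).1‖ = lam ^ k * ‖(L v).1‖ := by
          rw [norm_mul, norm_pow, Real.norm_of_nonneg hlam0.le]
      _ ≤ lam ^ n * (c * lam⁻¹ ^ n) := by
          gcongr
          exact hlam.le
      _ = c := by
          rw [inv_pow, mul_left_comm, mul_inv_cancel₀ (by positivity), mul_one]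
  have hcontract : ‖lam⁻¹ ^ k * (L v).2‖ ≤ c :=
    calc ‖lam⁻¹ ^ k * (L v).2‖ = lam⁻¹ ^ k * ‖(L v).2‖ := by
          rw [norm_mul, norm_pow, Real.norm_of_nonneg (by positivity)]
      _ ≤ 1 * c := by
          gcongr
          exact pow_le_one₀ (by positivity) (inv_le_one_of_one_le₀ hlam.le)
      _ = c := one_mul c
  calc ‖T^[k] v‖ = ‖L.symm (L (T^[k] v))‖ := by rw [L.symm_apply_apply]
    _ ≤ ‖(L.symm : ℝ × ℝ →L[ℝ] ℝ × ℝ)‖ * ‖L (T^[k] v)‖ :=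
        (L.symm : ℝ × ℝ →L[ℝ] ℝ × ℝ).le_opNorm _
    _ ≤ ‖(L.symm : ℝ × ℝ →L[ℝ] ℝ × ℝ)‖ * c := by
        rw [apply_iterate_of_semiconj hL]
        gcongr
        exact max_le hexpand hcontract

lemma exists_le_measureReal_bowenBall (hlam : 1 < lam)
    (hL : Function.Semiconj L T (Prod.map (lam * ·) (lam⁻¹ * ·)))
    (hf : Function.Semiconj torusMk T f) (hcont : Continuous f) {ρ : ℝ} (hρ : 0 < ρ) :
    ∃ a > 0, ∀ n, a * lam⁻¹ ^ n ≤ volume.real (BowenBall f 0 ρ n) := by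
  have hnorm : 0 < ‖(L.symm : ℝ × ℝ →L[ℝ] ℝ × ℝ)‖ := L.norm_symm_pos
  obtain ⟨κ, hκ, measure_box⟩ := exists_measureReal_preimage_box_eq L
  let c := min ρ (1 / 4) / ‖(L.symm : ℝ × ℝ →L[ℝ] ℝ × ℝ)‖
  have hc : 0 < c := by positivity
  refine ⟨κ * c * c, by positivity, fun n ↦ ?_⟩
  calc κ * c * c * lam⁻¹ ^ n
      = volume.real (L ⁻¹' (Metric.closedBall 0 (c * lam⁻¹ ^ n) ×ˢ Metric.closedBall 0 c)) := by
        rw [measure_box (by positivity) hc.le]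
        ring
    _ ≤ volume.real (torusMk ⁻¹' BowenBall f 0 ρ n ∩ fundSquare) :=
        measureReal_mono ?_ ?_
    _ = volume.real (BowenBall f 0 ρ n) :=
        (measureReal_torus_eq (isClosed_bowenBall hcont 0 ρ n).measurableSet).symm
  · intro v hv
    have hbound {k : ℕ} (hk : k ≤ n) : ‖T^[k] v‖ ≤ min ρ (1 / 4) :=
      (norm_iterate_le_of_mem_box hlam hL hv hk).trans_eq (mul_div_cancel₀ _ hnorm.ne')
    refine ⟨(torusMk_mem_bowenBall_zero_iff hf).2 fun k hk ↦ ?_, mem_fundSquare_of_norm_lt ?_⟩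
    · exact (norm_torusMk_le _).trans ((hbound hk.le).trans (min_le_left _ _))
    · exact ((hbound n.zero_le).trans (min_le_right _ _)).trans_lt (by norm_num)
  · exact measure_ne_top_of_subset Set.inter_subset_right volume_fundSquare_ne_top

lemma exists_measureReal_bowenBall_le (hlam : 1 < lam)
    (hL : Function.Semiconj L T (Prod.map (lam * ·) (lam⁻¹ * ·)))
    (hf : Function.Semiconj torusMk T f) (hcont : Continuous f) :
    ∃ δ > 0, ∃ b, ∀ n, volume.real (BowenBall f 0 δ n) ≤ b * lam⁻¹ ^ n := by
  obtain ⟨δ, hδ, hTδ⟩ : ∃ δ > 0, ‖T‖ * δ ≤ 1 / 2 :=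
    ⟨1 / (2 * (‖T‖ + 1)), by positivity, by
      rw [mul_one_div, div_le_div_iff₀ (by positivity) two_pos]
      linarith⟩
  obtain ⟨κ, -, measure_box⟩ := exists_measureReal_preimage_box_eq L
  let c := ‖(L : ℝ × ℝ →L[ℝ] ℝ × ℝ)‖ * (1 / 2)
  have hc : 0 ≤ c := by positivity
  refine ⟨δ, hδ, κ * c * c, fun n ↦ ?_⟩
  have hlam_pow : 0 < lam ^ n := by positivity
  have norm_le {w : ℝ × ℝ} (hw : ‖w‖ ≤ 1 / 2) : ‖L w‖ ≤ c :=
    (L : ℝ × ℝ →L[ℝ] ℝ × ℝ).le_opNorm_of_le hw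
  calc volume.real (BowenBall f 0 δ n)
      = volume.real (torusMk ⁻¹' BowenBall f 0 δ n ∩ fundSquare) :=
        measureReal_torus_eq (isClosed_bowenBall hcont 0 δ n).measurableSet
    _ ≤ volume.real (L ⁻¹' (Metric.closedBall 0 (c * lam⁻¹ ^ n) ×ˢ Metric.closedBall 0 c)) :=
        measureReal_mono ?_ ?_
    _ = κ * c * c * lam⁻¹ ^ n := by
        rw [measure_box (by positivity) hc]
        ring
  · rintro v ⟨hv, hv_mem⟩
    have hv_norm := norm_le_of_mem_fundSquare hv_mem
    have hexpand := (norm_fst_le _).trans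
      (norm_le (norm_iterate_le_half hTδ hv_norm ((torusMk_mem_bowenBall_zero_iff hf).1 hv)))
    rw [apply_iterate_of_semiconj hL, norm_mul, Real.norm_of_nonneg hlam_pow.le] at hexpand
    refine ⟨?_, mem_closedBall_zero_iff.2 ((norm_snd_le _).trans (norm_le hv_norm))⟩
    rwa [mem_closedBall_zero_iff, inv_pow, ← div_eq_mul_inv, le_div_iff₀' hlam_pow]
  · exact (L.toHomeomorph.isCompact_preimage.2
      ((isCompact_closedBall _ _).prod (isCompact_closedBall _ _))).measure_ne_top

end HyperbolicLifts

section Diagonalization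

/-- The linear map of `ℝ × ℝ` with matrix `!![a, b; c, d]`. -/
noncomputable def planeMap (a b c d : ℝ) : ℝ × ℝ →L[ℝ] ℝ × ℝ :=
  let x := ContinuousLinearMap.fst ℝ ℝ ℝ
  let y := ContinuousLinearMap.snd ℝ ℝ ℝ
  (a • x + b • y).prod (c • x + d • y)

lemma planeMap_apply (a b c d : ℝ) (v : ℝ × ℝ) :
    planeMap a b c d v = (a * v.1 + b * v.2, c * v.1 + d * v.2) := rfl

lemma matAct_eq_planeMap (A : SpecialLinearGroup (Fin 2) ℤ) :
    matAct A = planeMap (A.1 0 0) (A.1 0 1) (A.1 1 0) (A.1 1 1) := rfl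

lemma exists_equiv_eq_planeMap {a b c d : ℝ} (h : a * d - b * c ≠ 0) :
    ∃ L : (ℝ × ℝ) ≃L[ℝ] (ℝ × ℝ), ⇑L = planeMap a b c d := by
  let Δ := a * d - b * c
  have hΔ : Δ ≠ 0 := h
  refine ⟨.equivOfInverse (planeMap a b c d) (planeMap (d / Δ) (-b / Δ) (-c / Δ) (a / Δ))
    (fun v ↦ ?_) fun v ↦ ?_, rfl⟩ <;>
  · simp only [planeMap_apply]
    ext <;> field_simp <;> simp only [Δ] <;> ring

lemma exists_semiconj_planeMap_diagonal {a b c d lam mu : ℝ} (hc : c ≠ 0) (hne : lam ≠ mu)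
    (htrace : a + d = lam + mu) (hdet : a * d - b * c = lam * mu) :
    ∃ L : (ℝ × ℝ) ≃L[ℝ] (ℝ × ℝ),
      Function.Semiconj L (planeMap a b c d) (Prod.map (lam * ·) (mu * ·)) := by
  have hΔ : c * (mu - a) - (lam - a) * c ≠ 0 := by
    rw [show c * (mu - a) - (lam - a) * c = c * (mu - lam) by ring]
    exact mul_ne_zero hc (sub_ne_zero.2 hne.symm)
  -- The rows `(c, lam - a)` and `(c, mu - a)` are left eigenvectors.
  obtain ⟨L, hL⟩ := exists_equiv_eq_planeMap hΔ
  refine ⟨L, fun v ↦ ?_⟩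
  simp only [hL, planeMap_apply, Prod.map_apply]
  ext
  · linear_combination v.2 * lam * htrace - v.2 * hdet
  · linear_combination v.2 * mu * htrace - v.2 * hdet

lemma three_le_trace {A : Matrix (Fin 2) (Fin 2) ℤ} {lam : ℝ} (hlam : 1 < lam)
    (htr : (A 0 0 : ℝ) + A 1 1 = lam + lam⁻¹) : 3 ≤ A.trace := by
  have htwo_lt : 2 < lam + lam⁻¹ := by
    rw [← sub_pos, show lam + lam⁻¹ - 2 = (lam - 1) ^ 2 / lam by field_simp; ring]
    have := sub_pos.2 hlam
    positivity
  have : (2 : ℝ) < A.trace := by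
    rw [trace_fin_two]
    push_cast
    linarith
  exact_mod_cast this

lemma exists_semiconj_matAct_diagonal {A : SpecialLinearGroup (Fin 2) ℤ} {lam : ℝ}
    (hlam : 1 < lam) (htr : (A.1 0 0 : ℝ) + A.1 1 1 = lam + lam⁻¹) :
    ∃ L : (ℝ × ℝ) ≃L[ℝ] (ℝ × ℝ),
      Function.Semiconj L (matAct A) (Prod.map (lam * ·) (lam⁻¹ * ·)) := by
  have hA : ¬IsSquare A.1.discr := not_isSquare_discr A.2 (three_le_trace hlam htr)
  have hc : A.1 1 0 ≠ 0 := by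
    intro hc
    refine hA ⟨A.1 0 0 - A.1 1 1, ?_⟩
    rw [discr_fin_two, trace_fin_two, det_fin_two, hc]
    ring
  have hdet : (A.1 0 0 : ℝ) * A.1 1 1 - A.1 0 1 * A.1 1 0 = lam * lam⁻¹ := by
    rw [mul_inv_cancel₀ (by positivity)]
    exact_mod_cast (det_fin_two A.1).symm.trans A.2
  exact exists_semiconj_planeMap_diagonal (Int.cast_ne_zero.2 hc)
    ((inv_lt_one_of_one_lt₀ hlam).trans hlam).ne' htr hdet

end Diagonalization

section Homogeneity

variable {A : SpecialLinearGroup (Fin 2) ℤ} {fA : Torus ≃ₜ Torus}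

lemma exists_measureReal_bowenBall_bounds {lam : ℝ} (hlam : 1 < lam)
    (htr : (A.1 0 0 : ℝ) + A.1 1 1 = lam + lam⁻¹)
    (hfA : Function.Semiconj torusMk (matAct A) fA) {ε : ℝ} (hε : 0 < ε)
    (hexp : IsExpansiveConst fA ε) :
    ∃ a > 0, ∃ b > 0, ∀ x n, a * lam⁻¹ ^ n ≤ volume.real (BowenBall fA x ε n) ∧
      volume.real (BowenBall fA x ε n) ≤ b * lam⁻¹ ^ n := by
  obtain ⟨L, hL⟩ := exists_semiconj_matAct_diagonal hlam htr
  rw [matAct_eq_planeMap] at hL hfA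
  obtain ⟨a, ha, hlower⟩ := exists_le_measureReal_bowenBall hlam hL hfA fA.continuous hε
  obtain ⟨δ, hδ, b₀, hb₀⟩ := exists_measureReal_bowenBall_le hlam hL hfA fA.continuous
  let F : Torus →+ Torus := .mk' fA (map_add_of_semiconj_torusMk hfA)
  have translate (x : Torus) (ρ : ℝ) (n : ℕ) :
      volume.real (BowenBall fA x ρ n) = volume.real (BowenBall fA 0 ρ n) :=
    measureReal_bowenBall_eq_bowenBall_zero volume F x ρ n
  have hpres : MeasurePreserving fA (volume : Measure Torus) volume :=
    F.measurePreserving fA.continuous fA.surjective rfl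
  obtain ⟨b, hupper⟩ := hexp.exists_measureReal_bowenBall_le hpres hδ (by positivity)
    (inv_le_one_of_one_le₀ hlam.le) fun x n ↦ (translate x δ n).trans_le (hb₀ n)
  have hab : a ≤ b := by
    simpa only [pow_zero, mul_one] using (hlower 0).trans (hupper 0 0)
  exact ⟨a, ha, b, ha.trans_le hab,
    fun x n ↦ ⟨(hlower n).trans_eq (translate x ε n).symm, hupper x n⟩⟩

end Homogeneity

end ToralAut

open ToralAut in
theorem limit_of_periodic_measures_homogeneous_general
    {A : Matrix.SpecialLinearGroup (Fin 2) ℤ} {lam : ℝ} (hlam : 1 < lam)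
    (htr : ((A.1 0 0 : ℤ) : ℝ) + ((A.1 1 1 : ℤ) : ℝ) = lam + lam⁻¹)
    {fA : Torus ≃ₜ Torus} (hfA : Function.Semiconj torusMk (matAct A) fA)
    {ν : Measure Torus} [IsProbabilityMeasure ν]
    {α : Type*} {l : Filter α} [l.NeBot] {φ : α → ℕ} (hφ : Tendsto φ l atTop)
    (hlim : ∀ g : C(Torus, ℝ),
      Tendsto (fun i ↦ ∫ x, g x ∂(nuMeas fA (φ i))) l (𝓝 (∫ x, g x ∂ν)))
    {ε : ℝ} (hε : 0 < ε) (hexp : IsExpansiveConst fA ε) :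
    ∃ Aε > 0, ∃ Bε > 0,
      (∀ x (n : ℕ), Aε * lam ^ (-(n : ℤ)) ≤ ν.real (BowenBall fA x ε n) ∧
        ν.real (BowenBall fA x ε n) ≤ Bε * lam ^ (-(n : ℤ))) ∧
      ∀ x y n, ν.real (BowenBall fA y ε n) ≤ Bε / Aε * ν.real (BowenBall fA x ε n) := by
  obtain rfl : ν = volume := eq_volume_of_tendsto_integral_nuMeas A.2 (three_le_trace hlam htr)
    (semiconj_torusEquiv hfA) hφ hlim
  obtain ⟨a, ha, b, hb, hbounds⟩ := exists_measureReal_bowenBall_bounds hlam htr hfA hε hexp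
  simp only [_root_.zpow_neg, zpow_natCast, ← inv_pow]
  refine ⟨a, ha, b, hb, hbounds, fun x y n ↦ ?_⟩
  calc volume.real (BowenBall fA y ε n) ≤ b * lam⁻¹ ^ n := (hbounds y n).2
    _ = b / a * (a * lam⁻¹ ^ n) := by field_simp
    _ ≤ b / a * volume.real (BowenBall fA x ε n) := by
        gcongr
        exact (hbounds x n).1

/-- every weak* limit point of `(ν_r)` is a homogeneous measure:
its Bowen balls have measure comparable to `λ^{-n}`. -/
theorem limit_of_periodic_measures_homogeneous
    (A : Matrix.SpecialLinearGroup (Fin 2) ℤ)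
    (lam : ℝ) (hlam : 1 < lam)
    (htr : ((A.1 0 0 : ℤ) : ℝ) + ((A.1 1 1 : ℤ) : ℝ) = lam + lam⁻¹)
    (fA : Torus ≃ₜ Torus)
    (hfA : ∀ v : ℝ × ℝ, fA (torusMk v) = torusMk (matAct A v))
    -- ν is a weak* limit point of the sequence (ν_r)
    (ν : Measure Torus) (hprob : IsProbabilityMeasure ν)
    (φ : ℕ → ℕ) (hφ : StrictMono φ)
    (hlim : ∀ g : C(Torus, ℝ),
      Tendsto (fun r : ℕ => ∫ x, g x ∂(nuMeas fA (φ r))) atTop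
        (nhds (∫ x, g x ∂ν))) :
    ∀ ε : ℝ, 0 < ε →
      (∀ x y : Torus,
        (∀ t : ℤ, dist (zIter fA t x) (zIter fA t y) ≤ 3 * ε) → x = y) →
      ∃ Aε Bε : ℝ, 0 < Aε ∧ 0 < Bε ∧
        (∀ x : Torus, ∀ n : ℕ, 1 ≤ n →
          Aε * lam ^ (-(n:ℤ)) ≤ (ν (BowenBall (⇑fA) x ε n)).toReal ∧
          (ν (BowenBall (⇑fA) x ε n)).toReal ≤ Bε * lam ^ (-(n:ℤ))) ∧
        (∀ x y : Torus, ∀ n : ℕ, 1 ≤ n →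
          (ν (BowenBall (⇑fA) y ε n)).toReal ≤
            (Bε / Aε) * (ν (BowenBall (⇑fA) x ε n)).toReal) := by
  intro ε hε hexp
  obtain ⟨a, ha, b, hb, hbounds, hratio⟩ := limit_of_periodic_measures_homogeneous_general hlam htr
    (fun v ↦ (hfA v).symm) hφ.tendsto_atTop hlim hε
    (ToralAut.IsExpansiveConst.mono hexp (by linarith))
  exact ⟨a, b, ha, hb, fun x n _ ↦ hbounds x n, fun x y n _ ↦ hratio x y n⟩
end

section
/- The sequence (μ_n)_{n∈ℕ} of probability measures on S², defined by μ_n = (1/Per_n(g_A)) Σ_{p ∈ P_n(g_A)} δ_p, converges in the weak* topology to a Borel probability measure μ on S². -/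
open Matrix

open MeasureTheory Filter

/-!
Points of period `n` of the quotient map are the classes `{x, -x}` with `Aⁿ x = x` or `Aⁿ x = -x`,
and counting `{Aⁿ x = x}` and `{Aⁿ x = -x}` together, with multiplicity, counts each such class
exactly twice. So it suffices that these two finite subgroups of the torus equidistribute to Haar
measure. A finite subgroup that is `δ`-dense averages a continuous function up to its modulus of
continuity at `δ`, because translating the argument by any torus element is, up to `δ`, translating
it by an element of the subgroup. Finally `Aⁿ ∓ 1 = Aʰ (Aᵏ ∓ A⁻ʰ)` with `h + k = n`, both about
`n / 2`, and by hyperbolicity `Aᵏ ∓ A⁻ʰ` expands stable and unstable directions alike: its inverse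
is small, which makes its kernel on the torus dense at a small scale.
-/

open Topology Asymptotics
open scoped Matrix.Module Matrix.Norms.Operator

section Equidistribution

/-- Along the filter `l`, the sets `s i` meet every ball of any fixed radius. -/
def EventuallyDense {κ X : Type*} [PseudoMetricSpace X] (s : κ → Set X) (l : Filter κ) : Prop :=
  ∀ ε > 0, ∀ᶠ i in l, ∀ x, ∃ a ∈ s i, dist x a < ε

/-- Equidistribution of the finite sets `s i` with respect to the probability measure `μ`: averages
of continuous functions over `s i` approach the integral. The condition is multiplied out by the
cardinality, so that it passes to sums over several sets. -/
def Equidistributed {κ X : Type*} [TopologicalSpace X] [MeasurableSpace X] (s : κ → Set X)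
    (l : Filter κ) (μ : Measure X) : Prop :=
  ∀ φ : C(X, ℝ), (fun i ↦ ∑ᶠ x ∈ s i, (φ x - ∫ y, φ y ∂μ)) =o[l] fun i ↦ ((s i).ncard : ℝ)

variable {κ : Type*} {l : Filter κ}

section AddSubgroup

variable {G : Type*} [SeminormedAddCommGroup G]

theorem abs_sum_sub_sum_add_le (H : AddSubgroup G) [Fintype H] {φ : G → ℝ} {δ η : ℝ}
    (hφ : ∀ x y, dist x y < δ → dist (φ x) (φ y) ≤ η) {x : G} (hx : ∃ a ∈ H, dist x a < δ) :
    |∑ a : H, (φ a - φ (a + x))| ≤ Fintype.card H * η := by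
  obtain ⟨b, hb, hxb⟩ := hx
  have translate : ∑ a : H, φ (a + x) = ∑ a : H, φ (a - b + x) :=
    ((Equiv.subRight (⟨b, hb⟩ : H)).sum_comp fun a : H ↦ φ (a + x)).symm
  have near (a : H) : |φ a - φ (a - b + x)| ≤ η := by
    refine hφ _ _ ?_
    rwa [sub_add_eq_add_sub, add_sub_assoc, dist_self_add_right, ← dist_eq_norm]
  rw [Finset.sum_sub_distrib, translate, ← Finset.sum_sub_distrib]
  calc |∑ a : H, (φ a - φ (a - b + x))|
      ≤ ∑ a : H, |φ a - φ (a - b + x)| := Finset.abs_sum_le_sum_abs _ _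
    _ ≤ ∑ _a : H, η := Finset.sum_le_sum fun a _ ↦ near a
    _ = Fintype.card H * η := by simp

variable [CompactSpace G] [MeasurableSpace G] [BorelSpace G] (μ : Measure G)
  [IsProbabilityMeasure μ] [μ.IsAddLeftInvariant]

theorem abs_finsum_mem_sub_integral_le (H : AddSubgroup G) (hH : (H : Set G).Finite) (φ : C(G, ℝ))
    {δ η : ℝ} (hφ : ∀ x y, dist x y < δ → dist (φ x) (φ y) ≤ η)
    (hdense : ∀ x, ∃ a ∈ H, dist x a < δ) :
    |∑ᶠ a ∈ (H : Set G), (φ a - ∫ x, φ x ∂μ)| ≤ (H : Set G).ncard * η := by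
  have : Fintype H := hH.fintype
  have integrable_translate (a : G) : Integrable (fun x ↦ φ (a + x)) μ :=
    Continuous.integrable_of_hasCompactSupport (by fun_prop) (.of_compactSpace _)
  have integrable_diff (a : G) : Integrable (fun x ↦ φ a - φ (a + x)) μ :=
    (integrable_const _).sub (integrable_translate a)
  have sum_eq_integral : ∑ a : H, (φ a - ∫ x, φ x ∂μ) = ∫ x, ∑ a : H, (φ a - φ (a + x)) ∂μ := by
    rw [integral_finsetSum _ fun (a : H) _ ↦ integrable_diff a]
    refine Finset.sum_congr rfl fun a _ ↦ ?_
    rw [integral_sub (integrable_const _) (integrable_translate a),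
      integral_add_left_eq_self (fun x ↦ φ x), integral_const, probReal_univ, one_smul]
  have norm_le (x : G) : ‖∑ a : H, (φ a - φ (a + x))‖ ≤ Fintype.card H * η :=
    abs_sum_sub_sum_add_le H hφ (hdense x)
  calc |∑ᶠ a ∈ (H : Set G), (φ a - ∫ x, φ x ∂μ)|
      = ‖∫ x, ∑ a : H, (φ a - φ (a + x)) ∂μ‖ := by
        rw [← sum_eq_integral, ← finsum_set_coe_eq_finsum_mem, Real.norm_eq_abs]
        exact congrArg _ (finsum_eq_sum_of_fintype _)
    _ ≤ Fintype.card H * η := by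
        simpa using norm_integral_le_of_norm_le_const (μ := μ) (.of_forall norm_le)
    _ = (H : Set G).ncard * η := by
        rw [← Nat.card_coe_set_eq, ← Nat.card_eq_fintype_card]; rfl

theorem EventuallyDense.equidistributed {H : κ → AddSubgroup G}
    (hfin : ∀ᶠ i in l, (H i : Set G).Finite) (hdense : EventuallyDense (fun i ↦ (H i : Set G)) l) :
    Equidistributed (fun i ↦ (H i : Set G)) l μ := by
  intro φ
  refine isLittleO_iff.2 fun η hη ↦ ?_
  obtain ⟨δ, hδ, hφ⟩ := Metric.uniformContinuous_iff.1
    (CompactSpace.uniformContinuous_of_continuous φ.continuous) η hη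
  filter_upwards [hfin, hdense δ hδ] with i hi hδi
  rw [RCLike.norm_natCast, mul_comm]
  exact abs_finsum_mem_sub_integral_le μ (H i) hi φ (fun x y h ↦ (hφ h).le) hδi

end AddSubgroup

section Quotient

variable {X S M : Type*} [AddCommMonoid M] {σ : X → X} {π : X → S}

theorem finsum_mem_preimage_add_finsum_mem_fixedPoints (hsurj : Function.Surjective π)
    (hπ : ∀ x y, π x = π y ↔ x = y ∨ x = σ y) {P : Set S} (hP : (π ⁻¹' P).Finite) (f : S → M) :
    ∑ᶠ x ∈ π ⁻¹' P, f (π x) + ∑ᶠ x ∈ π ⁻¹' P ∩ {x | x = σ x}, f (π x) = 2 • ∑ᶠ y ∈ P, f y := by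
  classical
  have hPfin : P.Finite := hP.of_preimage hsurj
  set w : X → M := fun x ↦ f (π x) + if x = σ x then f (π x) else 0
  have sum_fibre (y : S) (hy : y ∈ P) : ∑ x ∈ hP.toFinset with π x = y, w x = 2 • f y := by
    obtain ⟨x, rfl⟩ := hsurj y
    have hσ : π (σ x) = π x := (hπ _ _).2 (.inr rfl)
    have fibre_eq : hP.toFinset.filter (π · = π x) = {x, σ x} := by
      ext z
      simp only [Finset.mem_filter, Set.Finite.mem_toFinset, Set.mem_preimage, Finset.mem_insert,
        Finset.mem_singleton, ← hπ]
      exact and_iff_right_of_imp fun h ↦ h ▸ hy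
    rw [fibre_eq, two_nsmul]
    by_cases hx : x = σ x
    · rw [← hx, Finset.pair_eq_singleton, Finset.sum_singleton]
      simp only [w, if_pos hx]
    · have hσx : σ x ≠ σ (σ x) := fun h ↦ hx (((hπ _ _).1 hσ.symm).elim id (h ▸ ·))
      rw [Finset.sum_pair hx]
      simp only [w, if_neg hx, if_neg hσx, hσ, add_zero]
  calc ∑ᶠ x ∈ π ⁻¹' P, f (π x) + ∑ᶠ x ∈ π ⁻¹' P ∩ {x | x = σ x}, f (π x)
      = ∑ x ∈ hP.toFinset, w x := by
        rw [finsum_mem_eq_finite_toFinset_sum _ hP,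
          finsum_mem_eq_finite_toFinset_sum _ (hP.inter_of_left _), Finset.sum_add_distrib,
          ← Finset.sum_filter]
        congr 2
        ext x
        simp
    _ = ∑ y ∈ hPfin.toFinset, ∑ x ∈ hP.toFinset with π x = y, w x :=
        (Finset.sum_fiberwise_of_maps_to (by simp) w).symm
    _ = ∑ y ∈ hPfin.toFinset, 2 • f y :=
        Finset.sum_congr rfl fun y hy ↦ sum_fibre y (hPfin.mem_toFinset.1 hy)
    _ = 2 • ∑ᶠ y ∈ P, f y := by
        rw [← Finset.smul_sum, finsum_mem_eq_finite_toFinset_sum _ hPfin]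

theorem finsum_mem_fixed_add_finsum_mem_flipped (hsurj : Function.Surjective π)
    (hπ : ∀ x y, π x = π y ↔ x = y ∨ x = σ y) {T : X → X} {g : S → S}
    (hg : ∀ x, g (π x) = π (T x)) (hfix : {x | T x = x}.Finite) (hflip : {x | T x = σ x}.Finite)
    (f : S → M) :
    ∑ᶠ x ∈ {x | T x = x}, f (π x) + ∑ᶠ x ∈ {x | T x = σ x}, f (π x) =
      2 • ∑ᶠ y ∈ {y | g y = y}, f y := by
  have union_eq : {x | T x = x} ∪ {x | T x = σ x} = π ⁻¹' {y | g y = y} := by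
    ext x
    simp [hg, hπ]
  have inter_eq : {x | T x = x} ∩ {x | T x = σ x} = π ⁻¹' {y | g y = y} ∩ {x | x = σ x} := by
    rw [← union_eq]
    ext x
    simp only [Set.mem_inter_iff, Set.mem_union, Set.mem_ofPred_eq]
    grind
  rw [← finsum_mem_union_inter hfix hflip, inter_eq, union_eq]
  exact finsum_mem_preimage_add_finsum_mem_fixedPoints hsurj hπ
    (union_eq ▸ hfix.union hflip) f


variable [TopologicalSpace X] [MeasurableSpace X] [BorelSpace X] {μ : Measure X}
  [TopologicalSpace S] [MeasurableSpace S] [BorelSpace S]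

theorem Equidistributed.fixedPoints_map (hcont : Continuous π) (hsurj : Function.Surjective π)
    (hπ : ∀ x y, π x = π y ↔ x = y ∨ x = σ y) {T : κ → X → X} {g : κ → S → S}
    (hg : ∀ i x, g i (π x) = π (T i x)) (hfix : Equidistributed (fun i ↦ {x | T i x = x}) l μ)
    (hflip : Equidistributed (fun i ↦ {x | T i x = σ x}) l μ)
    (hfix_fin : ∀ᶠ i in l, {x | T i x = x}.Finite)
    (hflip_fin : ∀ᶠ i in l, {x | T i x = σ x}.Finite) :
    Equidistributed (fun i ↦ {y | g i y = y}) l (μ.map π) := by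
  intro φ
  rw [integral_map hcont.aemeasurable φ.continuous.aestronglyMeasurable]
  have key : (fun i ↦ 2 * ∑ᶠ y ∈ {y | g i y = y}, (φ y - ∫ x, φ (π x) ∂μ)) =o[l]
      fun i ↦ 2 * ({y | g i y = y}.ncard : ℝ) := by
    refine ((hfix (φ.comp ⟨π, hcont⟩)).add_add (hflip (φ.comp ⟨π, hcont⟩))).congr' ?_ ?_
    · filter_upwards [hfix_fin, hflip_fin] with i hi hi'
      simpa using finsum_mem_fixed_add_finsum_mem_flipped hsurj hπ (hg i) hi hi'
        fun y ↦ φ y - ∫ x, φ (π x) ∂μ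
    · filter_upwards [hfix_fin, hflip_fin] with i hi hi'
      have := finsum_mem_fixed_add_finsum_mem_flipped hsurj hπ (hg i) hi hi' fun _ ↦ 1
      rw [finsum_one, finsum_one, finsum_one] at this
      simp only [RCLike.norm_natCast]
      exact_mod_cast this
  exact (isLittleO_const_mul_left_iff two_ne_zero).1
    ((isLittleO_const_mul_right_iff two_ne_zero).1 key)

end Quotient

section DiracAverage

/-- The uniform probability measure on a nonempty finite set `P`: the average of the Dirac measures
at its points. For an empty or infinite `P` it is a junk value, not a probability measure. -/
noncomputable def diracAverage {S : Type*} [MeasurableSpace S] (P : Set S) : Measure S :=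
  (Nat.card P : ENNReal)⁻¹ • Measure.sum fun p : P ↦ Measure.dirac (p : S)

variable {S : Type*} [MeasurableSpace S] {P : Set S}

theorem integral_diracAverage (hP : P.Finite) {f : S → ℝ} (hf : StronglyMeasurable f) :
    ∫ x, f x ∂diracAverage P = (P.ncard : ℝ)⁻¹ * ∑ᶠ y ∈ P, f y := by
  have := hP.fintype
  rw [diracAverage, integral_smul_measure, Measure.sum_fintype,
    integral_finsetSum_measure fun p _ ↦ integrable_dirac' hf (by simp),
    ← finsum_set_coe_eq_finsum_mem, finsum_eq_sum_of_fintype, Nat.card_coe_set_eq]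
  simp [integral_dirac' _ _ hf]

theorem Equidistributed.tendsto_integral_diracAverage [TopologicalSpace S] [BorelSpace S]
    {μ : Measure S} {P : κ → Set S} (h : Equidistributed P l μ) (hfin : ∀ᶠ i in l, (P i).Finite)
    (hne : ∀ᶠ i in l, (P i).Nonempty) (φ : C(S, ℝ)) :
    Tendsto (fun i ↦ ∫ x, φ x ∂diracAverage (P i)) l (𝓝 (∫ x, φ x ∂μ)) := by
  rw [← tendsto_sub_nhds_zero_iff]
  refine (h φ).tendsto_div_nhds_zero.congr' ?_
  filter_upwards [hfin, hne] with i hi hi'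
  have hcard : ((P i).ncard : ℝ) ≠ 0 := Nat.cast_ne_zero.2 ((Set.ncard_pos hi).2 hi').ne'
  have sum_const : ∑ᶠ y ∈ P i, ∫ x, φ x ∂μ = (P i).ncard * ∫ x, φ x ∂μ := by
    rw [finsum_mem_eq_finite_toFinset_sum _ hi, Finset.sum_const, nsmul_eq_mul,
      Set.ncard_eq_toFinset_card _ hi]
  rw [integral_diracAverage hi φ.continuous.stronglyMeasurable,
    finsum_mem_sub_distrib (fun y ↦ φ y) (fun _ ↦ ∫ x, φ x ∂μ) hi, sum_const]
  field_simp

end DiracAverage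

end Equidistribution

section Hyperbolic

/-- Hyperbolicity of a unit `a`: a decomposition `1 = p + (1 - p)` whose first part is contracted by
the negative powers of `a` and whose second part by the positive ones. For an invertible real matrix
it says that every vector is the sum of an unstable and a stable one. -/
def HasHyperbolicSplitting {R : Type*} [Ring R] [TopologicalSpace R] (a : Rˣ) : Prop :=
  ∃ p : R, Tendsto (fun n : ℕ ↦ ((a⁻¹ ^ n : Rˣ) : R) * p) atTop (𝓝 0) ∧
    Tendsto (fun n : ℕ ↦ ((a ^ n : Rˣ) : R) * (1 - p)) atTop (𝓝 0)

theorem pow_mul_of_mul_eq_smul {𝕜 R : Type*} [CommSemiring 𝕜] [Semiring R] [Algebra 𝕜 R] {a q : R}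
    {l : 𝕜} (h : a * q = l • q) (n : ℕ) : a ^ n * q = l ^ n • q := by
  induction n with
  | zero => simp
  | succ n ih => rw [pow_succ, mul_assoc, h, mul_smul_comm, ih, smul_smul, pow_succ']

theorem tendsto_pow_mul_zero {𝕜 R : Type*} [NormedField 𝕜] [Ring R] [TopologicalSpace R]
    [Algebra 𝕜 R] [ContinuousSMul 𝕜 R] {a q : R} {l : 𝕜} (h : a * q = l • q) (hl : ‖l‖ < 1) :
    Tendsto (fun n : ℕ ↦ a ^ n * q) atTop (𝓝 0) := by
  simp only [pow_mul_of_mul_eq_smul h]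
  simpa using (tendsto_pow_atTop_nhds_zero_of_norm_lt_one hl).smul_const q

theorem hasHyperbolicSplitting_of_mul_eq_zero {𝕜 R : Type*} [NormedField 𝕜] [Ring R]
    [TopologicalSpace R] [Algebra 𝕜 R] [ContinuousSMul 𝕜 R] {a : Rˣ} {l m : 𝕜} (hl : 1 < ‖l‖)
    (hm : ‖m‖ < 1) (ha : ((a : R) - l • 1) * ((a : R) - m • 1) = 0) :
    HasHyperbolicSplitting a := by
  have hl0 : l ≠ 0 := norm_pos_iff.1 (one_pos.trans hl)
  have hlm : l - m ≠ 0 := sub_ne_zero.2 fun h ↦ (hm.trans hl).ne (by rw [h])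
  have hcomm : ((a : R) - m • 1) * ((a : R) - l • 1) = 0 := by
    rw [← ha]; simp only [sub_mul, mul_sub, smul_mul_assoc, mul_smul_comm, one_mul, mul_one]; module
  have unstable : (a : R) * ((a : R) - m • 1) = l • ((a : R) - m • 1) := by
    rwa [sub_mul, smul_mul_assoc, one_mul, sub_eq_zero] at ha
  have stable : (a : R) * ((a : R) - l • 1) = m • ((a : R) - l • 1) := by
    rwa [sub_mul, smul_mul_assoc, one_mul, sub_eq_zero] at hcomm
  have unstable_inv : ((a⁻¹ : Rˣ) : R) * ((a : R) - m • 1) = l⁻¹ • ((a : R) - m • 1) := by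
    rw [Units.inv_mul_eq_iff_eq_mul, mul_smul_comm, unstable, inv_smul_smul₀ hl0]
  -- `p` is the spectral projection of `a` onto the eigenvalue `l`.
  refine ⟨(l - m)⁻¹ • ((a : R) - m • 1), ?_, ?_⟩ <;> simp only [Units.val_pow_eq_pow_val]
  · refine tendsto_pow_mul_zero (l := l⁻¹) ?_ (by rw [norm_inv]; exact inv_lt_one_of_one_lt₀ hl)
    rw [mul_smul_comm, unstable_inv, smul_comm]
  · refine tendsto_pow_mul_zero (l := m) ?_ hm
    have : 1 - (l - m)⁻¹ • ((a : R) - m • 1) = -(l - m)⁻¹ • ((a : R) - l • 1) := by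
      have : (1 : R) = (l - m)⁻¹ • ((l - m) • 1) := (inv_smul_smul₀ hlm 1).symm
      nth_rw 1 [this]; module
    rw [this, mul_smul_comm, stable, smul_comm]

theorem sub_smul_one_mul_sub_smul_one_fin_two {R : Type*} [CommRing R]
    {M : Matrix (Fin 2) (Fin 2) R} {l m : R} (htr : M.trace = l + m) (hdet : M.det = l * m) :
    (M - l • 1) * (M - m • 1) = 0 := by
  nontriviality R
  have cayley_hamilton := M.aeval_self_charpoly
  rw [Matrix.charpoly_fin_two, htr, hdet] at cayley_hamilton
  simp only [map_add, map_sub, map_mul, Polynomial.aeval_X, Polynomial.aeval_C,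
    Algebra.algebraMap_eq_smul_one, sq, smul_mul_assoc, one_mul] at cayley_hamilton
  rw [← cayley_hamilton]
  simp only [add_mul, sub_mul, mul_sub, smul_mul_assoc, mul_smul_comm, one_mul, mul_one]
  module

theorem hasHyperbolicSplitting_map_intCast {A : Matrix.SpecialLinearGroup (Fin 2) ℤ} {l : ℝ}
    (hl : 1 < |l|) (htr : ((A.1 0 0 : ℤ) : ℝ) + ((A.1 1 1 : ℤ) : ℝ) = l + l⁻¹) :
    HasHyperbolicSplitting
      (Matrix.GeneralLinearGroup.map (Int.castRingHom ℝ) (Matrix.SpecialLinearGroup.toGL A)) := by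
  have hl0 : l ≠ 0 := abs_pos.1 (one_pos.trans hl)
  refine hasHyperbolicSplitting_of_mul_eq_zero (l := l) (m := l⁻¹) hl
    (by rw [norm_inv]; exact inv_lt_one_of_one_lt₀ hl)
    (sub_smul_one_mul_sub_smul_one_fin_two ?_ ?_)
  · simpa [Matrix.trace_fin_two] using htr
  · change ((Int.castRingHom ℝ).mapMatrix A.1).det = _
    rw [← RingHom.map_det, A.2, map_one, mul_inv_cancel₀ hl0]

theorem units_pow_sub_zsmul_mul_eq {R : Type*} [Ring R] (a : Rˣ) (p : R) (h k : ℕ) (s : ℤˣ) :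
    (((a ^ k : Rˣ) : R) - (s : ℤ) • ((a⁻¹ ^ h : Rˣ) : R)) *
        (((a⁻¹ ^ k : Rˣ) : R) * p - (s : ℤ) • (((a ^ h : Rˣ) : R) * (1 - p))) =
      1 - (s : ℤ) • (((a⁻¹ ^ (k + h) : Rˣ) : R) * p + ((a ^ (k + h) : Rˣ) : R) * (1 - p)) := by
  have hss : (s : ℤ) * s = 1 := by rw [← Units.val_mul, Int.units_mul_self, Units.val_one]
  have pos_neg : ((a ^ k : Rˣ) : R) * ((a⁻¹ ^ k : Rˣ) : R) = 1 := by
    rw [← Units.val_mul, inv_pow, mul_inv_cancel, Units.val_one]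
  have neg_pos : ((a⁻¹ ^ h : Rˣ) : R) * ((a ^ h : Rˣ) : R) = 1 := by
    rw [← Units.val_mul, inv_pow, inv_mul_cancel, Units.val_one]
  rw [pow_add a, add_comm k h, pow_add a⁻¹]
  simp only [Units.val_mul, sub_mul, mul_sub, smul_mul_assoc, mul_smul_comm, ← mul_assoc, pos_neg,
    neg_pos, mul_one, one_mul, smul_sub, smul_add, smul_smul, hss, one_smul]
  abel

variable {R : Type*} [NormedRing R]

theorem eventually_exists_mul_eq_one_norm_lt_of_tendsto [HasSummableGeomSeries R]
    {κ : Type*} {l : Filter κ} {b u : κ → R} (hu : Tendsto u l (𝓝 0))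
    (hbu : Tendsto (fun i ↦ b i * u i) l (𝓝 1)) {ε : ℝ} (hε : 0 < ε) :
    ∀ᶠ i in l, ∃ c, b i * c = 1 ∧ ‖c‖ < ε := by
  have hinv : Tendsto (fun i ↦ u i * Ring.inverse (b i * u i)) l (𝓝 0) := by
    have := (NormedRing.inverse_continuousAt (1 : Rˣ)).tendsto.comp hbu
    simpa using hu.mul this
  filter_upwards [hbu.eventually (Units.isOpen.mem_nhds isUnit_one),
    hinv.norm.eventually (gt_mem_nhds (by simpa using hε))] with i hunit hnorm
  exact ⟨_, by rw [← mul_assoc, Ring.mul_inverse_cancel _ hunit], hnorm⟩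

theorem HasHyperbolicSplitting.eventually_exists_mul_eq_one_norm_lt [HasSummableGeomSeries R]
    {a : Rˣ} (ha : HasHyperbolicSplitting a) (s : ℤˣ) {ε : ℝ} (hε : 0 < ε) :
    ∀ᶠ n : ℕ in atTop, ∃ c : R,
      (((a ^ (n - n / 2) : Rˣ) : R) - (s : ℤ) • ((a⁻¹ ^ (n / 2) : Rˣ) : R)) * c = 1 ∧ ‖c‖ < ε := by
  obtain ⟨p, hp, hq⟩ := ha
  have hhalf : Tendsto (fun n : ℕ ↦ n / 2) atTop atTop := Nat.tendsto_div_const_atTop two_ne_zero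
  have hhalf' : Tendsto (fun n : ℕ ↦ n - n / 2) atTop atTop :=
    tendsto_atTop_mono (fun n ↦ by omega) hhalf
  refine eventually_exists_mul_eq_one_norm_lt_of_tendsto
    (u := fun n ↦ ((a⁻¹ ^ (n - n / 2) : Rˣ) : R) * p -
      (s : ℤ) • (((a ^ (n / 2) : Rˣ) : R) * (1 - p))) ?_ ?_ hε
  · simpa using (hp.comp hhalf').sub ((hq.comp hhalf).const_smul (s : ℤ))
  · have hlim : Tendsto (fun n : ℕ ↦ 1 - (s : ℤ) • (((a⁻¹ ^ n : Rˣ) : R) * p +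
        ((a ^ n : Rˣ) : R) * (1 - p))) atTop (𝓝 1) := by
      simpa using ((hp.add hq).const_smul (s : ℤ)).const_sub (1 : R)
    refine hlim.congr fun n ↦ ?_
    rw [units_pow_sub_zsmul_mul_eq, Nat.sub_add_cancel (Nat.div_le_self n 2)]

theorem units_pow_add_smul_eq_zsmul_iff {R M : Type*} [Ring R] [AddCommGroup M] [Module R M]
    (a : Rˣ) (h k : ℕ) (s : ℤ) (x : M) :
    ((a ^ (h + k) : Rˣ) : R) • x = s • x ↔
      (((a ^ k : Rˣ) : R) - s • ((a⁻¹ ^ h : Rˣ) : R)) • x = 0 := by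
  have factor : ((a ^ (h + k) : Rˣ) : R) - s • 1 =
      ((a ^ h : Rˣ) : R) * (((a ^ k : Rˣ) : R) - s • ((a⁻¹ ^ h : Rˣ) : R)) := by
    rw [mul_sub, mul_smul_comm, ← Units.val_mul, ← Units.val_mul, ← pow_add, inv_pow,
      mul_inv_cancel, Units.val_one]
  rw [← sub_eq_zero, ← one_smul R (s • x), smul_comm, ← smul_assoc, ← sub_smul, factor, mul_smul]
  exact smul_eq_zero_iff_eq (a ^ h)

end Hyperbolic

section Torus

theorem finite_setOf_zsmul_eq_zero (p : ℝ) {d : ℤ} (hd : d ≠ 0) :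
    {u : AddCircle p | d • u = 0}.Finite := by
  refine (AddCircle.finite_torsion p (Int.natAbs_pos.2 hd)).subset fun u hu ↦ ?_
  obtain h | h := Int.natAbs_eq d <;> rw [h] at hu <;> simpa using hu

theorem surjective_coe_unitAddTorus {ι : Type*} :
    Function.Surjective fun (v : ι → ℝ) (i : ι) ↦ (v i : UnitAddCircle) :=
  (QuotientAddGroup.mk_surjective (s := AddSubgroup.zmultiples (1 : ℝ))).comp_left

variable {ι : Type*} [Fintype ι]

theorem norm_coe_unitAddTorus_le (v : ι → ℝ) : ‖fun i ↦ (v i : UnitAddCircle)‖ ≤ ‖v‖ :=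
  (pi_norm_le_iff_of_nonneg (norm_nonneg v)).2 fun i ↦
    QuotientAddGroup.norm_mk_le_norm.trans (norm_le_pi_norm v i)

variable [DecidableEq ι]

theorem finite_setOf_matrix_smul_eq_zero {B : Matrix ι ι ℤ} (hB : B.det ≠ 0) :
    {x : UnitAddTorus ι | B • x = 0}.Finite := by
  refine (Set.Finite.pi' fun _ ↦ finite_setOf_zsmul_eq_zero 1 hB).subset fun x hx i ↦ ?_
  have det_smul : B.det • x = 0 := by
    rw [← one_smul (Matrix ι ι ℤ) x, ← smul_assoc, ← Matrix.adjugate_mul, mul_smul,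
      show B • x = 0 from hx, smul_zero]
  exact congrFun det_smul i

theorem matrix_smul_coe (B : Matrix ι ι ℤ) (v : ι → ℝ) :
    B • (fun i ↦ (v i : UnitAddCircle)) =
      fun i ↦ (((B.map Int.cast *ᵥ v) i : ℝ) : UnitAddCircle) := by
  ext i
  simp [Matrix.mulVec, dotProduct, ← zsmul_eq_mul]

theorem exists_matrix_smul_eq_zero_dist_le {B : Matrix ι ι ℤ} {C : Matrix ι ι ℝ}
    (hBC : B.map Int.cast * C = 1) (x : UnitAddTorus ι) :
    ∃ a : UnitAddTorus ι, B • a = 0 ∧ dist x a ≤ ‖C‖ / 2 := by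
  obtain ⟨v, rfl⟩ := surjective_coe_unitAddTorus x
  set w : ι → ℝ := B.map Int.cast *ᵥ v
  set r : ι → ℝ := fun i ↦ w i - round (w i)
  have norm_r_le : ‖r‖ ≤ 1 / 2 :=
    (pi_norm_le_iff_of_nonneg (by norm_num)).2 fun i ↦ abs_sub_round (w i)
  refine ⟨fun i ↦ ((v - C *ᵥ r) i : ℝ), ?_, ?_⟩
  · have image_eq_round : B.map Int.cast *ᵥ (v - C *ᵥ r) = fun i ↦ (round (w i) : ℝ) := by
      rw [Matrix.mulVec_sub, Matrix.mulVec_mulVec, hBC, Matrix.one_mulVec]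
      exact sub_sub_cancel _ _
    rw [matrix_smul_coe, image_eq_round]
    exact funext fun i ↦ (AddCircle.coe_eq_zero_iff 1).2 ⟨round (w i), by simp⟩
  · calc dist (fun i ↦ (v i : UnitAddCircle)) (fun i ↦ ((v - C *ᵥ r) i : ℝ))
        = ‖fun i ↦ ((C *ᵥ r) i : UnitAddCircle)‖ := by
          rw [dist_eq_norm]; congr 1; ext i; simp
      _ ≤ ‖C *ᵥ r‖ := norm_coe_unitAddTorus_le _
      _ ≤ ‖C‖ * ‖r‖ := Matrix.linfty_opNorm_mulVec C r
      _ ≤ ‖C‖ * (1 / 2) := by gcongr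
      _ = ‖C‖ / 2 := by ring

theorem det_ne_zero_of_map_intCast_mul_eq_one {B : Matrix ι ι ℤ} {C : Matrix ι ι ℝ}
    (hBC : B.map Int.cast * C = 1) : B.det ≠ 0 := by
  intro hB
  have : ((B.det : ℤ) : ℝ) * C.det = 1 := by
    rw [Int.cast_det, ← Matrix.det_mul, hBC, Matrix.det_one]
  simp [hB] at this

variable {A : GL ι ℤ}

theorem HasHyperbolicSplitting.eventually_finite_and_exists_dist_lt
    (hA : HasHyperbolicSplitting (Matrix.GeneralLinearGroup.map (Int.castRingHom ℝ) A)) (s : ℤˣ)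
    {ε : ℝ} (hε : 0 < ε) :
    ∀ᶠ n : ℕ in atTop, {x : UnitAddTorus ι | (A ^ n).1 • x = (s : ℤ) • x}.Finite ∧
      ∀ x : UnitAddTorus ι, ∃ a, (A ^ n).1 • a = (s : ℤ) • a ∧ dist x a < ε := by
  filter_upwards [hA.eventually_exists_mul_eq_one_norm_lt s hε] with n ⟨C, hC, hCε⟩
  set B : Matrix ι ι ℤ := (A ^ (n - n / 2)).1 - (s : ℤ) • (A⁻¹ ^ (n / 2)).1
  have hBC : B.map Int.cast * C = 1 := by
    change (Int.castRingHom ℝ).mapMatrix B * C = 1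
    simp only [← map_pow, ← map_inv] at hC
    rw [map_sub, map_zsmul]
    exact hC
  have eigen_iff (x : UnitAddTorus ι) : (A ^ n).1 • x = (s : ℤ) • x ↔ B • x = 0 := by
    rw [← units_pow_add_smul_eq_zsmul_iff, Nat.add_sub_cancel' (Nat.div_le_self n 2)]
  simp only [eigen_iff]
  refine ⟨finite_setOf_matrix_smul_eq_zero (det_ne_zero_of_map_intCast_mul_eq_one hBC),
    fun x ↦ ?_⟩
  obtain ⟨a, ha, hdist⟩ := exists_matrix_smul_eq_zero_dist_le hBC x
  exact ⟨a, ha, by linarith [norm_nonneg C]⟩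

variable (μ : Measure (UnitAddTorus ι)) [IsProbabilityMeasure μ] [μ.IsAddLeftInvariant]

theorem HasHyperbolicSplitting.equidistributed_setOf_smul_eq_zsmul
    (hA : HasHyperbolicSplitting (Matrix.GeneralLinearGroup.map (Int.castRingHom ℝ) A)) (s : ℤˣ) :
    Equidistributed (fun n : ℕ ↦ {x : UnitAddTorus ι | (A ^ n).1 • x = (s : ℤ) • x}) atTop μ :=
  EventuallyDense.equidistributed μ
    (H := fun n ↦ (DistribSMul.toAddMonoidHom _ (A ^ n).1).eqLocus (zsmulAddGroupHom (s : ℤ)))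
    ((hA.eventually_finite_and_exists_dist_lt s one_pos).mono fun _ h ↦ h.1)
    fun _ hε ↦ (hA.eventually_finite_and_exists_dist_lt s hε).mono fun _ h ↦ h.2

theorem periodic_measures_converge_general
    (hA : HasHyperbolicSplitting (Matrix.GeneralLinearGroup.map (Int.castRingHom ℝ) A))
    {S : Type*} [TopologicalSpace S] [MeasurableSpace S] [BorelSpace S] {π : UnitAddTorus ι → S}
    (hcont : Continuous π) (hsurj : Function.Surjective π)
    (hπ : ∀ x y, π x = π y ↔ x = y ∨ x = -y) {g : S → S} (hg : ∀ x, g (π x) = π (A.1 • x))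
    (φ : C(S, ℝ)) :
    Tendsto (fun n : ℕ ↦ ∫ y, φ y ∂diracAverage {y | g^[n] y = y}) atTop
      (𝓝 (∫ y, φ y ∂μ.map π)) := by
  have hiter (n : ℕ) (x : UnitAddTorus ι) : g^[n] (π x) = π ((A ^ n).1 • x) := by
    rw [Units.val_pow_eq_pow_val, ← smul_iterate_apply]
    exact (Function.Semiconj.iterate_right (fun x ↦ (hg x).symm) n x).symm
  have hfix_fin := (hA.eventually_finite_and_exists_dist_lt 1 one_pos).mono fun _ h ↦ h.1
  have hflip_fin := (hA.eventually_finite_and_exists_dist_lt (-1) one_pos).mono fun _ h ↦ h.1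
  have hfix := hA.equidistributed_setOf_smul_eq_zsmul μ 1
  have hflip := hA.equidistributed_setOf_smul_eq_zsmul μ (-1)
  simp only [Units.val_one, Units.val_neg, one_smul, neg_smul] at hfix_fin hflip_fin hfix hflip
  refine (hfix.fixedPoints_map hcont hsurj hπ hiter hflip hfix_fin
    hflip_fin).tendsto_integral_diracAverage ?_ (.of_forall fun n ↦ ⟨π 0, ?_⟩) φ
  · filter_upwards [hfix_fin, hflip_fin] with n hn hn'
    refine ((hn.union hn').subset fun x hx ↦ ?_).of_preimage hsurj
    rwa [Set.mem_preimage, Set.mem_ofPred_eq, hiter, hπ] at hx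
  · rw [Set.mem_ofPred_eq, hiter, smul_zero]

theorem apply_finTwoArrow_eq_of_torusMk {A : Matrix.SpecialLinearGroup (Fin 2) ℤ}
    {f : Torus → Torus} (hf : ∀ v, f (torusMk v) = torusMk (matAct A v))
    (x : UnitAddTorus (Fin 2)) :
    f (ContinuousLinearEquiv.finTwoArrow ℤ UnitAddCircle x) =
      ContinuousLinearEquiv.finTwoArrow ℤ UnitAddCircle (A.1 • x) := by
  obtain ⟨v, rfl⟩ := surjective_coe_unitAddTorus x
  have image_eq : torusMk (matAct A (v 0, v 1)) = ContinuousLinearEquiv.finTwoArrow ℤ UnitAddCircle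
      fun i ↦ (((A.1.map Int.cast *ᵥ v) i : ℝ) : UnitAddCircle) := by
    simp [torusMk, matAct, Matrix.mulVec, dotProduct, Fin.sum_univ_two]
  rw [matrix_smul_coe, ← image_eq]
  exact hf (v 0, v 1)

end Torus

/-- the averages of Dirac measures on the `n`-periodic points of
`g_A` converge in the weak* topology to a Borel probability measure `μ`. -/
theorem periodic_measures_converge
    (A : Matrix.SpecialLinearGroup (Fin 2) ℤ)
    (lam : ℝ) (hlam : 1 < lam)
    (htr : ((A.1 0 0 : ℤ) : ℝ) + ((A.1 1 1 : ℤ) : ℝ) = lam + lam⁻¹)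
    (fA : Torus ≃ₜ Torus)
    (hfA : ∀ v : ℝ × ℝ, fA (torusMk v) = torusMk (matAct A v))
    (S2 : Type) [MetricSpace S2] [CompactSpace S2]
    [MeasurableSpace S2] [BorelSpace S2]
    (π : Torus → S2) (hπcont : Continuous π) (hπsurj : Function.Surjective π)
    (hπ : ∀ x y : Torus, π x = π y ↔ (x = y ∨ x = -y))
    (gA : S2 ≃ₜ S2) (hgA : ∀ x : Torus, gA (π x) = π (fA x))
    -- the n-th averaged Dirac measure on periodic points of period n
    (μseq : ℕ → Measure S2)
    (hμseq : ∀ n : ℕ, μseq n =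
      (Nat.card {y : S2 | gA^[n] y = y} : ENNReal)⁻¹ •
        Measure.sum (fun p : {y : S2 | gA^[n] y = y} => Measure.dirac (p : S2))) :
    ∃ μ : Measure S2, IsProbabilityMeasure μ ∧
      ∀ g : C(S2, ℝ),
        Tendsto (fun n : ℕ => ∫ x, g x ∂(μseq n)) atTop (nhds (∫ x, g x ∂μ)) := by
  set e := ContinuousLinearEquiv.finTwoArrow ℤ UnitAddCircle
  have hcont : Continuous (π ∘ e) := hπcont.comp e.continuous
  set haar : Measure (UnitAddTorus (Fin 2)) := .pi fun _ ↦ AddCircle.haarAddCircle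
  refine ⟨haar.map (π ∘ e), Measure.isProbabilityMeasure_map hcont.aemeasurable, fun φ ↦ ?_⟩
  simp only [hμseq]
  exact periodic_measures_converge_general haar
    (hasHyperbolicSplitting_map_intCast (hlam.trans_le (le_abs_self lam)) htr) hcont
    (hπsurj.comp e.surjective) (fun x y ↦ by simp [hπ, ← map_neg])
    (fun x ↦ by rw [Function.comp_apply, hgA, apply_finTwoArrow_eq_of_torusMk hfA]; rfl) φ
end

section
/- Let f : X → X be a topologically mixing homeomorphism of a compact metric space. Then for every α > 0 there exists M ∈ ℕ such that for all x, y ∈ X and every n ≥ M there exists an α-pseudo-orbit of length n from x to y; that is, there are points x = η_0, η_1, …, η_n = y with d(f(η_i), η_{i+1}) < α for every 0 ≤ i < n. -/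
/-- `f` is topologically mixing. -/
def TopologicallyMixing {X : Type*} [TopologicalSpace X] (f : X ≃ₜ X) : Prop :=
  ∀ U V : Set X, IsOpen U → IsOpen V → U.Nonempty → V.Nonempty →
    ∃ n : ℕ, ∀ k : ℕ, n ≤ k → (f^[k] '' U ∩ V).Nonempty

/-!
Cover the space by finitely many small balls. By mixing, for all large `k` at once, there is an
orbit segment of length `k` from each of these balls to each of them. To join `x` to `y`, jump
from `f x` to the start of such a segment near `f x`, follow it, and replace its last point, which
is near `y`, by `y`.
-/

open Filter Set UniformSpace Function
open scoped Uniformity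

/-- Topological mixing for an arbitrary self-map, with all large times expressed by the filter
`atTop`. It extends `TopologicallyMixing`, which is restricted to homeomorphisms. -/
def TopologicallyMixingMap {X : Type*} [TopologicalSpace X] (f : X → X) : Prop :=
  ∀ U V : Set X, IsOpen U → IsOpen V → U.Nonempty → V.Nonempty →
    ∀ᶠ k in atTop, (f^[k] '' U ∩ V).Nonempty

theorem TopologicallyMixing.topologicallyMixingMap {X : Type*} [TopologicalSpace X] {f : X ≃ₜ X}
    (hf : TopologicallyMixing f) : TopologicallyMixingMap f :=
  fun U V hU hV hU₀ hV₀ ↦ eventually_atTop.2 (hf U V hU hV hU₀ hV₀)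

/-- Some `V`-pseudo-orbit of `f` with `n` steps leads from `x` to `y`. The size of the jumps is
controlled by a relation `V`, in practice an entourage; `V = {p | dist p.1 p.2 < α}` gives
`α`-pseudo-orbits. Only the values `η 0, …, η n` matter. -/
def JoinedByPseudoOrbit {X : Type*} (f : X → X) (V : SetRel X X) (n : ℕ) (x y : X) : Prop :=
  ∃ η : ℕ → X, η 0 = x ∧ η n = y ∧ ∀ i < n, (f (η i), η (i + 1)) ∈ V

namespace JoinedByPseudoOrbit

variable {X : Type*} {f : X → X} {V : SetRel X X} {n : ℕ} {x y z : X}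

theorem iterate [V.IsRefl] (n : ℕ) (x : X) : JoinedByPseudoOrbit f V n x (f^[n] x) :=
  ⟨fun i ↦ f^[i] x, rfl, rfl, fun i _ ↦ by
    simpa only [iterate_succ_apply'] using V.refl (f (f^[i] x))⟩

theorem cons (hxy : (f x, y) ∈ V) (hyz : JoinedByPseudoOrbit f V n y z) :
    JoinedByPseudoOrbit f V (n + 1) x z := by
  obtain ⟨η, rfl, hη_last, hη⟩ := hyz
  refine ⟨fun i ↦ Nat.casesOn i x η, rfl, hη_last, ?_⟩
  rintro (_ | i) hi
  · exact hxy
  · exact hη i (Nat.lt_of_succ_lt_succ hi)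

theorem snoc (hxy : JoinedByPseudoOrbit f V n x y) (hyz : (f y, z) ∈ V) :
    JoinedByPseudoOrbit f V (n + 1) x z := by
  obtain ⟨η, hη_zero, rfl, hη⟩ := hxy
  refine ⟨update η (n + 1) z, by simpa using hη_zero, update_self .., fun i hi ↦ ?_⟩
  rw [update_of_ne hi.ne]
  rcases Nat.lt_succ_iff_lt_or_eq.1 hi with hin | rfl
  · rw [update_of_ne (Nat.succ_lt_succ hin).ne]
    exact hη i hin
  · rwa [update_self]

theorem of_orbit_near [V.IsRefl] (hxz : (f x, z) ∈ V) (hzy : (f^[n + 1] z, y) ∈ V) :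
    JoinedByPseudoOrbit f V (n + 2) x y :=
  ((iterate n z).snoc (by rwa [← iterate_succ_apply' f])).cons hxz

end JoinedByPseudoOrbit

theorem TopologicallyMixingMap.eventually_forall_exists_orbit_near {X : Type*} [UniformSpace X]
    {f : X → X} (hf : TopologicallyMixingMap f) (hX : TotallyBounded (univ : Set X))
    {V : SetRel X X} (hV : V ∈ 𝓤 X) :
    ∀ᶠ k in atTop, ∀ x y : X, ∃ z, (x, z) ∈ V ∧ (f^[k] z, y) ∈ V := by
  obtain ⟨W, hW, hW_open, hW_symm, hWV⟩ := comp_open_symm_mem_uniformity_sets hV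
  obtain ⟨t, ht, hcover⟩ := hX W hW
  have exists_center (x : X) : ∃ a ∈ t, (x, a) ∈ W := by simpa using hcover (mem_univ x)
  have balls_meet : ∀ᶠ k in atTop, ∀ a ∈ t, ∀ b ∈ t, (f^[k] '' ball a W ∩ ball b W).Nonempty :=
    ht.eventually_all.2 fun a _ ↦ ht.eventually_all.2 fun b _ ↦
      hf _ _ (isOpen_ball a hW_open) (isOpen_ball b hW_open)
        ⟨a, mem_ball_self a hW⟩ ⟨b, mem_ball_self b hW⟩
  filter_upwards [balls_meet] with k hk x y
  obtain ⟨a, ha, hxa⟩ := exists_center x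
  obtain ⟨b, hb, hyb⟩ := exists_center y
  obtain ⟨_, ⟨z, haz, rfl⟩, hbz⟩ := hk a ha b hb
  exact ⟨z, hWV ⟨a, hxa, haz⟩, hWV ⟨b, SetRel.symm W hbz, SetRel.symm W hyb⟩⟩

theorem mixing_implies_pseudo_orbit_connection_general {X : Type*} [UniformSpace X]
    (hX : TotallyBounded (univ : Set X)) {f : X → X} (hf : TopologicallyMixingMap f)
    {V : SetRel X X} (hV : V ∈ 𝓤 X) :
    ∀ᶠ n in atTop, ∀ x y : X, JoinedByPseudoOrbit f V n x y := by
  have : V.IsRefl := ⟨fun _ ↦ refl_mem_uniformity hV⟩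
  obtain ⟨M, hM⟩ := eventually_atTop.1 (hf.eventually_forall_exists_orbit_near hX hV)
  filter_upwards [eventually_ge_atTop (M + 2)] with n hn x y
  obtain ⟨m, rfl⟩ := Nat.exists_eq_add_of_le' (le_of_add_le_right hn)
  obtain ⟨z, hxz, hzy⟩ := hM (m + 1) (by omega) (f x) y
  exact .of_orbit_near hxz hzy

/-- a topologically mixing homeomorphism of a compact metric space
connects any two points by `α`-pseudo-orbits of any sufficiently large length. -/
theorem mixing_implies_pseudo_orbit_connection
    {X : Type*} [MetricSpace X] [CompactSpace X] (f : X ≃ₜ X)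
    (hmix : TopologicallyMixing f) :
    ∀ α : ℝ, 0 < α → ∃ M : ℕ, ∀ x y : X, ∀ n : ℕ, M ≤ n →
      ∃ η : ℕ → X, η 0 = x ∧ η n = y ∧
        ∀ i < n, dist (f (η i)) (η (i+1)) < α := by
  intro α hα
  obtain ⟨M, hM⟩ := eventually_atTop.1 <| mixing_implies_pseudo_orbit_connection_general
    isCompact_univ.totallyBounded hmix.topologicallyMixingMap (Metric.dist_mem_uniformity hα)
  exact ⟨M, fun x y n hn ↦ hM n hn x y⟩
end
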